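/- arXiv:quant-ph/0308088 — 2 statements merged into one kernel-verified Lean document; each statement's English description precedes it below -/
import Mathlib

section
/- If a state ρ^{AB} on H_A ⊗ H_B admits an extension ρ^{ABE} on H_A ⊗ H_B ⊗ H_E with H_E finite-dimensional such that the quantum conditional mutual information vanishes, I(A;B|E) = 0, then ρ^{AB} is separable, i.e. ρ^{AB} = ∑_i p_i |ψ_i⟩⟨ψ_i| ⊗ |φ_i⟩⟨φ_i| for some finite probability distribution (p_i) and unit vectors |ψ_i⟩ ∈ H_A, |φ_i⟩ ∈ H_B. -/
open Matrix BigOperators Kronecker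
open scoped Classical ComplexOrder

noncomputable section

/-- A (quantum) state: positive semidefinite matrix of trace 1. -/
def IsState {n : Type*} [Fintype n] (ρ : Matrix n n ℂ) : Prop :=
  ρ.PosSemidef ∧ ρ.trace = 1

/-- Von Neumann entropy (base 2), via the eigenvalues of a Hermitian matrix. -/
def vonNeumannEntropy {n : Type*} [Fintype n] (ρ : Matrix n n ℂ) : ℝ :=
  if h : ρ.IsHermitian then ∑ i, -(h.eigenvalues i * Real.logb 2 (h.eigenvalues i)) else 0

/-- Partial trace over the second (right) factor. -/
def ptraceR {A B : Type*} [Fintype A] [Fintype B]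
    (ρ : Matrix (A × B) (A × B) ℂ) : Matrix A A ℂ :=
  fun i j => ∑ b, ρ (i, b) (j, b)

/-- Partial trace over the first (left) factor. -/
def ptraceL {A B : Type*} [Fintype A] [Fintype B]
    (ρ : Matrix (A × B) (A × B) ℂ) : Matrix B B ℂ :=
  fun i j => ∑ a, ρ (a, i) (a, j)

variable {A B E : Type*} [Fintype A] [Fintype B] [Fintype E]

/-- Marginal of a tripartite state on `A × E` (trace out `B`). -/
def margAE (ρ : Matrix (A × B × E) (A × B × E) ℂ) : Matrix (A × E) (A × E) ℂ :=
  fun x y => ∑ b, ρ (x.1, b, x.2) (y.1, b, y.2)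

/-- Marginal of a tripartite state on `B × E` (trace out `A`). -/
def margBE (ρ : Matrix (A × B × E) (A × B × E) ℂ) : Matrix (B × E) (B × E) ℂ :=
  fun x y => ∑ a, ρ (a, x.1, x.2) (a, y.1, y.2)

/-- Marginal of a tripartite state on `E` (trace out `A` and `B`). -/
def margE (ρ : Matrix (A × B × E) (A × B × E) ℂ) : Matrix E E ℂ :=
  fun x y => ∑ a, ∑ b, ρ (a, b, x) (a, b, y)

/-- Marginal of a tripartite state on `A × B` (trace out `E`). -/
def margAB (ρ : Matrix (A × B × E) (A × B × E) ℂ) : Matrix (A × B) (A × B) ℂ :=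
  fun x y => ∑ e, ρ (x.1, x.2, e) (y.1, y.2, e)

/-- Quantum conditional mutual information `I(A;B|E) = S(AE)+S(BE)-S(ABE)-S(E)`. -/
def condMutualInfo (ρ : Matrix (A × B × E) (A × B × E) ℂ) : ℝ :=
  vonNeumannEntropy (margAE ρ) + vonNeumannEntropy (margBE ρ)
    - vonNeumannEntropy ρ - vonNeumannEntropy (margE ρ)

/-- Squashed entanglement: infimum of `(1/2) I(A;B|E)` over all finite-dimensional
extensions of `ρ`. -/
def Esq {A B : Type*} [Fintype A] [Fintype B] (ρ : Matrix (A × B) (A × B) ℂ) : ℝ :=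
  sInf { x : ℝ | ∃ (d : ℕ) (ρE : Matrix (A × B × Fin d) (A × B × Fin d) ℂ),
    IsState ρE ∧ margAB ρE = ρ ∧ x = (1 / 2) * condMutualInfo ρE }

/-- Outer product `|ψ⟩⟨ψ|`. -/
def outer {n : Type*} (ψ : n → ℂ) : Matrix n n ℂ :=
  Matrix.vecMulVec ψ (star ψ)

/-- Trace norm of a Hermitian matrix: sum of the absolute values of its eigenvalues. -/
def traceNorm {n : Type*} [Fintype n] (X : Matrix n n ℂ) : ℝ :=
  if h : X.IsHermitian then ∑ i, |h.eigenvalues i| else 0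

/-- Entanglement of formation: infimum of average entanglement entropy over all
finite pure-state ensembles for `ρ`. -/
def EoF {A B : Type*} [Fintype A] [Fintype B] (ρ : Matrix (A × B) (A × B) ℂ) : ℝ :=
  sInf { x : ℝ | ∃ (n : ℕ) (p : Fin n → ℝ) (ψ : Fin n → A × B → ℂ),
    (∀ k, 0 ≤ p k) ∧ (∑ k, p k) = 1 ∧ (∀ k, ∑ i, ‖ψ k i‖ ^ 2 = 1) ∧
    (∑ k, (p k : ℂ) • outer (ψ k)) = ρ ∧
    x = ∑ k, p k * vonNeumannEntropy (ptraceR (outer (ψ k))) }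

/-- The function `η` : `η(x) = -x log₂ x` for `x ≤ 1/4`, `1/2` otherwise. -/
def eta (x : ℝ) : ℝ := if x ≤ 1 / 4 then -(x * Real.logb 2 x) else 1 / 2

/-!
Vanishing of `I(A;B|E)` is equality in the monotonicity of the relative entropy with respect to
`1 ⊗ ρ_BE` when `B` is discarded. In terms of the Nussbaum–Szkoła weights the relative entropies
are integrals of Cauchy transforms that are ordered pointwise, so equality makes the transforms
equal. Hence resolvents of the relative modular operators correspond to each other, and so do the
square roots which they interpolate: Petz's map recovers `ρ_ABE` from `ρ_AE`, and it does not
disturb the system `A`.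

Among the decompositions of `ρ_AE` into states choose one that maximises the average squared
Hilbert–Schmidt norm of the marginals on `A`. Recovering each piece and measuring `B` refines the
decomposition, so by maximality and strict convexity the marginal on `A` does not depend on the
outcome. As this holds for every measurement, each recovered piece is a product on `A ⊗ B`.
-/

/-! ### Cauchy transforms of finite measures -/

section CauchyTransform

open Polynomial in
lemma exists_sum_mul_inv_add_eq (S : Finset ℝ) (hS : ∀ x ∈ S, 0 < x) (h : ℝ → ℝ) :
    ∃ c : ℝ → ℝ, ∀ x ∈ S, ∑ t ∈ S, c t * (x + t)⁻¹ = h x := by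
  let v : ℝ → ℝ := fun t => -t
  let P := Lagrange.interpolate S id fun x => h x * (Lagrange.nodal S v).eval x
  have hP : P = Lagrange.interpolate S v fun t => P.eval (v t) :=
    Lagrange.eq_interpolate neg_injective.injOn
      (Lagrange.degree_interpolate_lt _ (Set.injOn_id _))
  refine ⟨fun t => Lagrange.nodalWeight S v t * P.eval (v t), fun x hx => ?_⟩
  have hne : ∀ t ∈ S, x ≠ v t := fun t ht => ((neg_neg_of_pos (hS t ht)).trans (hS x hx)).ne'
  have hnodal : (Lagrange.nodal S v).eval x ≠ 0 := Lagrange.eval_nodal_not_at_node hne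
  have heval : P.eval x = h x * (Lagrange.nodal S v).eval x :=
    Lagrange.eval_interpolate_at_node _ (Set.injOn_id _) hx
  rw [hP, Lagrange.eval_interpolate_not_at_node _ hne, mul_comm (h x)] at heval
  rw [← mul_left_cancel₀ hnodal heval]
  refine Finset.sum_congr rfl fun t _ => ?_
  rw [sub_neg_eq_add, mul_right_comm]

open Filter Topology

variable {ι : Type*} [Fintype ι] {w x : ι → ℝ}

lemma hasDerivAt_sum_mul_log_add (hx : ∀ k, w k ≠ 0 → 0 < x k) {T : ℝ} (hT : 0 ≤ T) :
    HasDerivAt (fun T => ∑ k, w k * Real.log (x k + T)) (∑ k, w k / (x k + T)) T := by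
  refine HasDerivAt.fun_sum fun k _ => ?_
  by_cases hw : w k = 0
  · simpa only [hw, zero_mul, zero_div] using hasDerivAt_const T (0 : ℝ)
  · have hlog := ((hasDerivAt_id' T).const_add (x k)).log
      (add_pos_of_pos_of_nonneg (hx k hw) hT).ne'
    simpa only [mul_one_div] using hlog.const_mul (w k)

lemma tendsto_sum_mul_log_add_atTop (hw : ∑ k, w k = 0) :
    Tendsto (fun T => ∑ k, w k * Real.log (x k + T)) atTop (𝓝 0) := by
  have hterm (k : ι) :
      Tendsto (fun T => w k * (Real.log (T + x k) - Real.log T)) atTop (𝓝 0) := by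
    simpa only [mul_zero] using (Real.tendsto_log_comp_add_sub_log (x k)).const_mul (w k)
  have hsum := tendsto_finsetSum Finset.univ fun k _ => hterm k
  rw [Finset.sum_const_zero] at hsum
  refine hsum.congr fun T => ?_
  simp only [mul_sub, Finset.sum_sub_distrib, ← Finset.sum_mul, hw, zero_mul, sub_zero,
    add_comm T]

-- The Cauchy transform is the derivative of `T ↦ ∑ w log (x + T)`, which vanishes at both ends.
lemma sum_div_add_eq_zero_of_nonneg (hx : ∀ k, w k ≠ 0 → 0 < x k) (hw : ∑ k, w k = 0)
    (hlog : ∑ k, w k * Real.log (x k) = 0) (hnonneg : ∀ T > 0, 0 ≤ ∑ k, w k / (x k + T))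
    {T : ℝ} (hT : 0 < T) : ∑ k, w k / (x k + T) = 0 := by
  let G : ℝ → ℝ := fun T => ∑ k, w k * Real.log (x k + T)
  have hG {T : ℝ} (hT : 0 ≤ T) : HasDerivAt G (∑ k, w k / (x k + T)) T :=
    hasDerivAt_sum_mul_log_add hx hT
  have hmono : MonotoneOn G (Set.Ici 0) := by
    refine monotoneOn_of_hasDerivWithinAt_nonneg (f' := fun T => ∑ k, w k / (x k + T))
      (convex_Ici 0) (fun T hT => (hG hT).continuousAt.continuousWithinAt) ?_ ?_ <;>
    rw [interior_Ici]
    · exact fun T hT => (hG hT.le).hasDerivWithinAt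
    · exact hnonneg
  have hconst : ∀ T ∈ Set.Ioi (0 : ℝ), G T = 0 := fun T hT => by
    refine le_antisymm ?_ ?_
    · refine ge_of_tendsto (tendsto_sum_mul_log_add_atTop (x := x) hw) ?_
      filter_upwards [eventually_ge_atTop T] with T' hT'
      exact hmono hT.out.le (hT.out.le.trans hT') hT'
    · have hG0 : G 0 = 0 := by simpa only [G, add_zero] using hlog
      exact hG0.symm.trans_le (hmono Set.self_mem_Ici hT.out.le hT.out.le)
  have hzero := (hasDerivAt_const T (0 : ℝ)).congr_of_eventuallyEq
    (eventually_of_mem (Ioi_mem_nhds hT) hconst)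
  exact (hG hT.le).unique hzero

lemma sum_div_add_eq_of_le {κ : Type*} [Fintype κ] {w' x' : κ → ℝ} (hx : ∀ k, w k ≠ 0 → 0 < x k)
    (hx' : ∀ k, w' k ≠ 0 → 0 < x' k) (hw : ∑ k, w k = ∑ k, w' k)
    (hlog : ∑ k, w k * Real.log (x k) = ∑ k, w' k * Real.log (x' k))
    (hle : ∀ T > 0, ∑ k, w' k / (x' k + T) ≤ ∑ k, w k / (x k + T)) {T : ℝ} (hT : 0 < T) :
    ∑ k, w k / (x k + T) = ∑ k, w' k / (x' k + T) := by
  have hsum (f : ℝ → ℝ) : ∑ k, Sum.elim w (-w') k * f (Sum.elim x x' k) =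
      ∑ k, w k * f (x k) - ∑ k, w' k * f (x' k) := by
    simp only [Fintype.sum_sum_type, Sum.elim_inl, Sum.elim_inr, Pi.neg_apply, neg_mul,
      Finset.sum_neg_distrib, sub_eq_add_neg]
  have hdiv (T : ℝ) := hsum fun x => (x + T)⁻¹
  simp only [← div_eq_mul_inv] at hdiv
  have hzero := sum_div_add_eq_zero_of_nonneg (w := Sum.elim w (-w')) (x := Sum.elim x x') ?_ ?_ ?_
    (fun T hT => (sub_nonneg.2 (hle T hT)).trans_eq (hdiv T).symm) hT
  · rwa [hdiv, sub_eq_zero] at hzero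
  · rintro (k | k) hk
    exacts [hx k hk, hx' k (neg_ne_zero.1 hk)]
  · simpa only [mul_one, hw, sub_self] using hsum fun _ => 1
  · rw [hsum, hlog, sub_self]

end CauchyTransform

/-! ### Positive semidefinite matrices -/

section PosSemidef

variable {n m : Type*} [Fintype n]

open scoped MatrixOrder in
lemma exists_eq_conjTranspose_mul_self_of_posSemidef {X : Matrix n n ℂ} (hX : X.PosSemidef) :
    ∃ F : Matrix n n ℂ, X = Fᴴ * F :=
  CStarAlgebra.nonneg_iff_eq_star_mul_self.1 hX.nonneg

lemma posSemidef_mul_eq_zero_of_trace {X : Matrix n n ℂ} (hX : X.PosSemidef)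
    {N : Matrix n m ℂ} [Fintype m] (h : (Nᴴ * X * N).trace = 0) : X * N = 0 := by
  obtain ⟨F, rfl⟩ := exists_eq_conjTranspose_mul_self_of_posSemidef hX
  have hsq : Nᴴ * (Fᴴ * F) * N = (F * N)ᴴ * (F * N) := by
    simp only [conjTranspose_mul, Matrix.mul_assoc]
  rw [hsq, trace_conjTranspose_mul_self_eq_zero_iff] at h
  rw [Matrix.mul_assoc, h, Matrix.mul_zero]

end PosSemidef

section Spectral

variable {n : Type*} [Fintype n] [DecidableEq n] {ρ σ : Matrix n n ℂ}

lemma continuousOn_real_spectrum (f : ℝ → ℝ) (ρ : Matrix n n ℂ) :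
    ContinuousOn f (spectrum ℝ ρ) :=
  finite_real_spectrum.continuousOn f

lemma cfc_mul_cfc (f g : ℝ → ℝ) (ρ : Matrix n n ℂ) :
    cfc f ρ * cfc g ρ = cfc (fun x => f x * g x) ρ :=
  (cfc_mul f g ρ (continuousOn_real_spectrum f ρ) (continuousOn_real_spectrum g ρ)).symm

lemma conjTranspose_cfc (f : ℝ → ℝ) (ρ : Matrix n n ℂ) : (cfc f ρ)ᴴ = cfc f ρ :=
  (cfc_predicate f ρ : IsSelfAdjoint _)

open scoped MatrixOrder in
lemma nonneg_of_mem_spectrum (hρ : ρ.PosSemidef) {x : ℝ} (hx : x ∈ spectrum ℝ ρ) : 0 ≤ x :=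
  spectrum_nonneg_of_nonneg hρ.nonneg hx

lemma cfc_id_eq_self (hρ : ρ.IsHermitian) : cfc (fun x : ℝ => x) ρ = ρ :=
  cfc_id' ℝ ρ hρ

lemma commute_cfc_self (f : ℝ → ℝ) (hρ : ρ.IsHermitian) : Commute (cfc f ρ) ρ := by
  have h := cfc_commute_cfc f (fun x => x) ρ
  rwa [cfc_id_eq_self hρ] at h

/-- The entries of `Y` with respect to the eigenbases of `σ` (rows) and `ρ` (columns). -/
def eigenCoord (hσ : σ.IsHermitian) (hρ : ρ.IsHermitian) (Y : Matrix n n ℂ) : Matrix n n ℂ :=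
  (hσ.eigenvectorUnitary : Matrix n n ℂ)ᴴ * Y * (hρ.eigenvectorUnitary : Matrix n n ℂ)

section eigenCoord

variable (hσ : σ.IsHermitian) (hρ : ρ.IsHermitian)

lemma eigenvectorUnitary_conjTranspose_mul_self :
    (hρ.eigenvectorUnitary : Matrix n n ℂ)ᴴ * (hρ.eigenvectorUnitary : Matrix n n ℂ) = 1 :=
  Unitary.coe_star_mul_self _

lemma eigenvectorUnitary_mul_conjTranspose_self :
    (hρ.eigenvectorUnitary : Matrix n n ℂ) * (hρ.eigenvectorUnitary : Matrix n n ℂ)ᴴ = 1 :=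
  Unitary.coe_mul_star_self _

lemma cfc_eq_mul_diagonal_mul (f : ℝ → ℝ) :
    cfc f ρ = (hρ.eigenvectorUnitary : Matrix n n ℂ) *
      diagonal (fun i => (f (hρ.eigenvalues i) : ℂ)) *
        (hρ.eigenvectorUnitary : Matrix n n ℂ)ᴴ := by
  rw [hρ.cfc_eq, IsHermitian.cfc, Unitary.conjStarAlgAut_apply]
  rfl

lemma trace_cfc (f : ℝ → ℝ) :
    (cfc f ρ).trace = ((∑ i, f (hρ.eigenvalues i) : ℝ) : ℂ) := by
  rw [cfc_eq_mul_diagonal_mul hρ, trace_mul_comm, ← Matrix.mul_assoc,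
    eigenvectorUnitary_conjTranspose_mul_self, Matrix.one_mul, trace_diagonal, Complex.ofReal_sum]

lemma eigenCoord_cfc_mul (f : ℝ → ℝ) (Y : Matrix n n ℂ) (j i : n) :
    eigenCoord hσ hρ (cfc f σ * Y) j i = f (hσ.eigenvalues j) * eigenCoord hσ hρ Y j i := by
  have h : eigenCoord hσ hρ (cfc f σ * Y) =
      diagonal (fun j => (f (hσ.eigenvalues j) : ℂ)) * eigenCoord hσ hρ Y := by
    simp only [eigenCoord, cfc_eq_mul_diagonal_mul hσ, ← Matrix.mul_assoc,
      eigenvectorUnitary_conjTranspose_mul_self, Matrix.one_mul]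
  rw [h, diagonal_mul]

lemma eigenCoord_mul_cfc (f : ℝ → ℝ) (Y : Matrix n n ℂ) (j i : n) :
    eigenCoord hσ hρ (Y * cfc f ρ) j i = eigenCoord hσ hρ Y j i * f (hρ.eigenvalues i) := by
  have h : eigenCoord hσ hρ (Y * cfc f ρ) =
      eigenCoord hσ hρ Y * diagonal (fun i => (f (hρ.eigenvalues i) : ℂ)) := by
    simp only [eigenCoord, cfc_eq_mul_diagonal_mul hρ, Matrix.mul_assoc,
      eigenvectorUnitary_conjTranspose_mul_self, Matrix.mul_one]
  rw [h, mul_diagonal]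

lemma eigenCoord_left_mul (Y : Matrix n n ℂ) (j i : n) :
    eigenCoord hσ hρ (σ * Y) j i = hσ.eigenvalues j * eigenCoord hσ hρ Y j i := by
  have h := eigenCoord_cfc_mul hσ hρ (fun x => x) Y j i
  rwa [cfc_id_eq_self hσ] at h

lemma eigenCoord_mul_right (Y : Matrix n n ℂ) (j i : n) :
    eigenCoord hσ hρ (Y * ρ) j i = eigenCoord hσ hρ Y j i * hρ.eigenvalues i := by
  have h := eigenCoord_mul_cfc hσ hρ (fun x => x) Y j i
  rwa [cfc_id_eq_self hρ] at h

lemma eigenCoord_right (j i : n) :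
    eigenCoord hσ hρ ρ j i = eigenCoord hσ hρ 1 j i * hρ.eigenvalues i := by
  simpa only [Matrix.one_mul] using eigenCoord_mul_right hσ hρ 1 j i

lemma eigenCoord_bijective : Function.Bijective (eigenCoord hσ hρ) := by
  refine Function.bijective_iff_has_inverse.2 ⟨fun Y =>
    (hσ.eigenvectorUnitary : Matrix n n ℂ) * Y * (hρ.eigenvectorUnitary : Matrix n n ℂ)ᴴ,
    fun Y => ?_, fun Y => ?_⟩
  · simp only [eigenCoord, Matrix.mul_assoc, eigenvectorUnitary_mul_conjTranspose_self,
      Matrix.mul_one]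
    rw [← Matrix.mul_assoc, eigenvectorUnitary_mul_conjTranspose_self, Matrix.one_mul]
  · simp only [eigenCoord, Matrix.mul_assoc, eigenvectorUnitary_conjTranspose_mul_self,
      Matrix.mul_one]
    rw [← Matrix.mul_assoc, eigenvectorUnitary_conjTranspose_mul_self, Matrix.one_mul]

lemma eigenCoord_add (Y Z : Matrix n n ℂ) :
    eigenCoord hσ hρ (Y + Z) = eigenCoord hσ hρ Y + eigenCoord hσ hρ Z := by
  simp only [eigenCoord, Matrix.mul_add, Matrix.add_mul]

lemma eigenCoord_smul (c : ℂ) (Y : Matrix n n ℂ) :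
    eigenCoord hσ hρ (c • Y) = c • eigenCoord hσ hρ Y := by
  simp only [eigenCoord, Matrix.mul_smul, Matrix.smul_mul]

lemma eigenCoord_sum_smul {ι : Type*} (S : Finset ι) (c : ι → ℂ) (Y : ι → Matrix n n ℂ) (j i : n) :
    eigenCoord hσ hρ (∑ t ∈ S, c t • Y t) j i = ∑ t ∈ S, c t * eigenCoord hσ hρ (Y t) j i := by
  simp only [eigenCoord, Finset.mul_sum, Finset.sum_mul, Matrix.mul_smul, Matrix.smul_mul,
    Matrix.sum_apply, Matrix.smul_apply, smul_eq_mul]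

lemma trace_eq_sum_eigenCoord (Y : Matrix n n ℂ) :
    Y.trace = ∑ k : n × n, star (eigenCoord hσ hρ 1 k.2 k.1) * eigenCoord hσ hρ Y k.2 k.1 := by
  have h : ((eigenCoord hσ hρ 1)ᴴ * eigenCoord hσ hρ Y).trace = Y.trace := by
    simp only [eigenCoord, conjTranspose_mul, conjTranspose_conjTranspose, Matrix.mul_one,
      Matrix.mul_assoc]
    rw [trace_mul_comm]
    simp only [Matrix.mul_assoc, eigenvectorUnitary_mul_conjTranspose_self, Matrix.mul_one]
    rw [← Matrix.mul_assoc, eigenvectorUnitary_mul_conjTranspose_self, Matrix.one_mul]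
  rw [← h, Fintype.sum_prod_type]
  simp only [trace, diag_apply, Matrix.mul_apply, conjTranspose_apply]

end eigenCoord

lemma cfc_sqrt_mul_cfc_sqrt (hρ : ρ.PosSemidef) : cfc Real.sqrt ρ * cfc Real.sqrt ρ = ρ := by
  rw [cfc_mul_cfc]
  nth_rw 2 [← cfc_id_eq_self hρ.1]
  exact cfc_congr fun x hx => Real.mul_self_sqrt (nonneg_of_mem_spectrum hρ hx)

/-- The orthogonal projection onto the support of a Hermitian matrix. -/
def suppProj (ρ : Matrix n n ℂ) : Matrix n n ℂ :=
  cfc (fun x : ℝ => if x = 0 then 0 else 1) ρ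

lemma cfc_mul_suppProj {f : ℝ → ℝ} (hf : f 0 = 0) (ρ : Matrix n n ℂ) :
    cfc f ρ * suppProj ρ = cfc f ρ := by
  rw [suppProj, cfc_mul_cfc]
  congr 1 with x
  split_ifs with hx <;> simp [hx, hf]

lemma cfc_inv_mul_cfc {f : ℝ → ℝ} (hf : ∀ x ∈ spectrum ℝ ρ, f x = 0 ↔ x = 0) :
    cfc (fun x => (f x)⁻¹) ρ * cfc f ρ = suppProj ρ := by
  rw [suppProj, cfc_mul_cfc]
  refine cfc_congr fun x hx => ?_
  have := hf x hx
  split_ifs with h0 <;> simp_all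

lemma suppProj_mul_eq_zero (hρ : ρ.IsHermitian) {m : Type*} {N : Matrix n m ℂ} (h : ρ * N = 0) :
    suppProj ρ * N = 0 := by
  rw [← cfc_inv_mul_cfc (f := fun x => x) fun _ _ => Iff.rfl, cfc_id_eq_self hρ, Matrix.mul_assoc,
    h, Matrix.mul_zero]

lemma isHermitian_suppProj (ρ : Matrix n n ℂ) : (suppProj ρ).IsHermitian :=
  conjTranspose_cfc _ ρ

lemma mul_suppProj_self (hρ : ρ.IsHermitian) : ρ * suppProj ρ = ρ := by
  have h := cfc_mul_suppProj (f := fun x => x) rfl ρ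
  rwa [cfc_id_eq_self hρ] at h

lemma suppProj_mul_of_le {ω : Matrix n n ℂ} (hρ : suppProj σ * ρ = ρ) (hω : ω.PosSemidef)
    (hωρ : (ρ - ω).PosSemidef) : suppProj σ * ω = ω := by
  set N := 1 - suppProj σ with hN
  have hNH : Nᴴ = N := by
    rw [hN, conjTranspose_sub, conjTranspose_one, (isHermitian_suppProj σ).eq]
  have hNρ : N * ρ = 0 := by rw [hN, Matrix.sub_mul, Matrix.one_mul, hρ, sub_self]
  have htrace : (Nᴴ * ω * N).trace = 0 := by
    refine le_antisymm ?_ (hω.conjTranspose_mul_mul_same N).trace_nonneg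
    have h := (hωρ.conjTranspose_mul_mul_same N).trace_nonneg
    rw [hNH] at h ⊢
    rwa [Matrix.mul_sub N, hNρ, zero_sub, Matrix.neg_mul, trace_neg, neg_nonneg] at h
  have h := congrArg conjTranspose (posSemidef_mul_eq_zero_of_trace hω htrace)
  rw [conjTranspose_mul, hω.1.eq, hNH, conjTranspose_zero, hN, Matrix.sub_mul, Matrix.one_mul,
    sub_eq_zero] at h
  exact h.symm

section NussbaumSzkola

/-- The Nussbaum–Szkoła weights `pᵢ |⟨vⱼ, uᵢ⟩|²` of the pair `(ρ, σ)`, where `(pᵢ, uᵢ)` and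
`(qⱼ, vⱼ)` are the eigenpairs of `ρ` and `σ`; they turn traces of functions of `ρ` and `σ` into
classical expectations. -/
def nsWeight (hσ : σ.IsHermitian) (hρ : ρ.IsHermitian) (k : n × n) : ℝ :=
  hρ.eigenvalues k.1 * Complex.normSq (eigenCoord hσ hρ 1 k.2 k.1)

/-- The eigenvalue ratios `qⱼ / pᵢ` attached to the weights `nsWeight`; the ratio is the junk value
`0` where `pᵢ = 0`, but there the weight vanishes. -/
def nsRatio (hσ : σ.IsHermitian) (hρ : ρ.IsHermitian) (k : n × n) : ℝ :=
  hσ.eigenvalues k.2 / hρ.eigenvalues k.1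

variable (hσ : σ.IsHermitian) (hρ : ρ.IsHermitian)

lemma trace_eq_sum_nsWeight {Y : Matrix n n ℂ} {h : n × n → ℝ}
    (hY : ∀ i j, eigenCoord hσ hρ Y j i = eigenCoord hσ hρ ρ j i * h (i, j)) :
    Y.trace = ((∑ k, nsWeight hσ hρ k * h k : ℝ) : ℂ) := by
  rw [trace_eq_sum_eigenCoord hσ hρ, Complex.ofReal_sum]
  refine Finset.sum_congr rfl fun ⟨i, j⟩ _ => ?_
  rw [hY, eigenCoord_right, nsWeight]
  push_cast
  rw [Complex.normSq_eq_conj_mul_self, starRingEnd_apply]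
  ring

lemma trace_eq_sum_nsWeight_one : ρ.trace = ((∑ k, nsWeight hσ hρ k : ℝ) : ℂ) := by
  simpa only [mul_one] using trace_eq_sum_nsWeight hσ hρ (h := fun _ => 1) fun i j => by
    rw [Complex.ofReal_one, mul_one]

lemma eigenCoord_right_eq_zero (hsupp : suppProj σ * ρ = ρ) {i j : n}
    (hj : hσ.eigenvalues j = 0) : eigenCoord hσ hρ ρ j i = 0 := by
  rw [← congrArg (eigenCoord hσ hρ) hsupp, suppProj, eigenCoord_cfc_mul, if_pos hj,
    Complex.ofReal_zero, zero_mul]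

end NussbaumSzkola

section Positive

variable (hσ : σ.PosSemidef) (hρ : ρ.PosSemidef)

lemma eigenvalues_pos_of_nsWeight_ne_zero (hsupp : suppProj σ * ρ = ρ) {k : n × n}
    (hk : nsWeight hσ.1 hρ.1 k ≠ 0) : 0 < hρ.1.eigenvalues k.1 ∧ 0 < hσ.1.eigenvalues k.2 := by
  have hp : hρ.1.eigenvalues k.1 ≠ 0 := left_ne_zero_of_mul hk
  have hc : eigenCoord hσ.1 hρ.1 1 k.2 k.1 ≠ 0 := Complex.normSq_pos.1 <|
    (Complex.normSq_nonneg _).lt_of_ne' (right_ne_zero_of_mul hk)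
  refine ⟨(hρ.eigenvalues_nonneg _).lt_of_ne' hp, (hσ.eigenvalues_nonneg _).lt_of_ne' fun hq => ?_⟩
  exact mul_ne_zero hc (Complex.ofReal_ne_zero.2 hp)
    (eigenCoord_right hσ.1 hρ.1 k.2 k.1 ▸ eigenCoord_right_eq_zero hσ.1 hρ.1 hsupp hq)

lemma nsRatio_pos (hsupp : suppProj σ * ρ = ρ) {k : n × n} (hk : nsWeight hσ.1 hρ.1 k ≠ 0) :
    0 < nsRatio hσ.1 hρ.1 k :=
  let ⟨hp, hq⟩ := eigenvalues_pos_of_nsWeight_ne_zero hσ hρ hsupp hk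
  div_pos hq hp

/-- Umegaki's relative entropy `Tr ρ (log ρ - log σ)`, in nats. It is meaningful when the support
of `ρ` lies in that of `σ`; the convention `log 0 = 0` makes it finite otherwise. -/
def relEntropy (ρ σ : Matrix n n ℂ) : ℝ :=
  (ρ * (cfc Real.log ρ - cfc Real.log σ)).trace.re

lemma relEntropy_eq_sum (hsupp : suppProj σ * ρ = ρ) :
    relEntropy ρ σ = -∑ k, nsWeight hσ.1 hρ.1 k * Real.log (nsRatio hσ.1 hρ.1 k) := by
  have hlogρ : (cfc Real.log ρ * ρ).trace = _ :=
    trace_eq_sum_nsWeight hσ.1 hρ.1 (h := fun k => Real.log (hρ.1.eigenvalues k.1)) fun i j => by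
      rw [← eigenCoord_mul_cfc, (commute_cfc_self _ hρ.1).eq]
  have hlogσ : (cfc Real.log σ * ρ).trace = _ :=
    trace_eq_sum_nsWeight hσ.1 hρ.1 (h := fun k => Real.log (hσ.1.eigenvalues k.2)) fun i j => by
      rw [eigenCoord_cfc_mul, mul_comm]
  rw [relEntropy, trace_mul_comm, Matrix.sub_mul, trace_sub, hlogρ, hlogσ, ← Complex.ofReal_sub,
    Complex.ofReal_re, ← Finset.sum_sub_distrib, ← Finset.sum_neg_distrib]
  refine Finset.sum_congr rfl fun k _ => ?_
  by_cases hk : nsWeight hσ.1 hρ.1 k = 0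
  · simp only [hk, zero_mul, sub_zero, neg_zero]
  · obtain ⟨hp, hq⟩ := eigenvalues_pos_of_nsWeight_ne_zero hσ hρ hsupp hk
    rw [nsRatio, Real.log_div hq.ne' hp.ne']
    ring

/-- The Sylvester operator `Y ↦ σ Y + T Y ρ`, which is `(Δ + T) Y` times `ρ` on the right, where
`Δ : Y ↦ σ Y ρ⁻¹` is the relative modular operator. -/
def sylvester (ρ σ : Matrix n n ℂ) (T : ℝ) (Y : Matrix n n ℂ) : Matrix n n ℂ :=
  σ * Y + (T : ℂ) • (Y * ρ)

/-- `Y` is the image of `1` under the resolvent `(Δ + T)⁻¹` of the relative modular operator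
`Δ : Y ↦ σ Y ρ⁻¹`, with the equation multiplied by `ρ` to make sense for singular `ρ`. -/
def IsModularResolvent (ρ σ : Matrix n n ℂ) (T : ℝ) (Y : Matrix n n ℂ) : Prop :=
  sylvester ρ σ T Y = ρ

lemma isModularResolvent_iff_eigenCoord (hσ : σ.IsHermitian) (hρ : ρ.IsHermitian) {T : ℝ}
    {Y : Matrix n n ℂ} :
    IsModularResolvent ρ σ T Y ↔ ∀ j i,
      ((hσ.eigenvalues j + T * hρ.eigenvalues i : ℝ) : ℂ) * eigenCoord hσ hρ Y j i =
        eigenCoord hσ hρ ρ j i := by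
  rw [IsModularResolvent, sylvester, ← (eigenCoord_bijective hσ hρ).1.eq_iff, ← Matrix.ext_iff]
  refine forall₂_congr fun j i => ?_
  rw [eigenCoord_add, eigenCoord_smul, Matrix.add_apply, Matrix.smul_apply, eigenCoord_left_mul,
    eigenCoord_mul_right, smul_eq_mul]
  push_cast
  ring_nf

lemma exists_isModularResolvent (hσ : σ.PosSemidef) (hρ : ρ.PosSemidef)
    (hsupp : suppProj σ * ρ = ρ) {T : ℝ} (hT : 0 < T) : ∃ Y, IsModularResolvent ρ σ T Y := by
  obtain ⟨Y, hY⟩ := (eigenCoord_bijective hσ.1 hρ.1).2 (Matrix.of fun j i =>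
    eigenCoord hσ.1 hρ.1 ρ j i / ((hσ.1.eigenvalues j + T * hρ.1.eigenvalues i : ℝ) : ℂ))
  refine ⟨Y, (isModularResolvent_iff_eigenCoord hσ.1 hρ.1).2 fun j i => ?_⟩
  rw [hY, of_apply]
  by_cases h0 : hσ.1.eigenvalues j + T * hρ.1.eigenvalues i = 0
  · have hq : hσ.1.eigenvalues j = 0 :=
      ((add_eq_zero_iff_of_nonneg (hσ.eigenvalues_nonneg j)
        (mul_nonneg hT.le (hρ.eigenvalues_nonneg i))).1 h0).1
    rw [eigenCoord_right_eq_zero hσ.1 hρ.1 hsupp hq, zero_div, mul_zero]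
  · exact mul_div_cancel₀ _ (Complex.ofReal_ne_zero.2 h0)

lemma IsModularResolvent.eigenCoord_eq {T : ℝ} {Y : Matrix n n ℂ}
    (hY : IsModularResolvent ρ σ T Y) (hT : 0 < T) {j i : n} (hp : 0 < hρ.1.eigenvalues i) :
    eigenCoord hσ.1 hρ.1 Y j i = eigenCoord hσ.1 hρ.1 1 j i *
      (((nsRatio hσ.1 hρ.1 (i, j) + T)⁻¹ : ℝ) : ℂ) := by
  have hq := hσ.eigenvalues_nonneg j
  have hpos : 0 < hσ.1.eigenvalues j + T * hρ.1.eigenvalues i := by positivity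
  have hratio : (nsRatio hσ.1 hρ.1 (i, j) + T)⁻¹ =
      hρ.1.eigenvalues i / (hσ.1.eigenvalues j + T * hρ.1.eigenvalues i) := by
    rw [nsRatio]
    field_simp
  apply mul_left_cancel₀ (Complex.ofReal_ne_zero.2 hpos.ne')
  rw [(isModularResolvent_iff_eigenCoord hσ.1 hρ.1).1 hY j i, eigenCoord_right, hratio,
    Complex.ofReal_div]
  field_simp [Complex.ofReal_ne_zero.2 hpos.ne']

lemma IsModularResolvent.trace_mul {T : ℝ} {Y : Matrix n n ℂ}
    (hY : IsModularResolvent ρ σ T Y) (hT : 0 < T) :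
    (ρ * Y).trace =
      ((∑ k, nsWeight hσ.1 hρ.1 k / (nsRatio hσ.1 hρ.1 k + T) : ℝ) : ℂ) := by
  simp only [div_eq_mul_inv]
  rw [trace_mul_comm]
  refine trace_eq_sum_nsWeight hσ.1 hρ.1 fun i j => ?_
  rw [eigenCoord_mul_right, eigenCoord_right]
  rcases (hρ.eigenvalues_nonneg i).eq_or_lt with hp | hp
  · simp only [← hp, Complex.ofReal_zero, mul_zero, zero_mul]
  · rw [hY.eigenCoord_eq hσ hρ hT hp, mul_right_comm]

lemma cfc_sqrt_mul_sum_resolvent (hsupp : suppProj σ * ρ = ρ) {S : Finset ℝ}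
    (hS : ∀ t ∈ S, 0 < t) (hmem : ∀ k, 0 < nsRatio hσ.1 hρ.1 k → nsRatio hσ.1 hρ.1 k ∈ S)
    {c : ℝ → ℝ} (hc : ∀ x ∈ S, ∑ t ∈ S, c t * (x + t)⁻¹ = (√x)⁻¹)
    {Y : ℝ → Matrix n n ℂ} (hY : ∀ t ∈ S, IsModularResolvent ρ σ t (Y t)) :
    cfc Real.sqrt σ * ∑ t ∈ S, (c t : ℂ) • Y t = cfc Real.sqrt ρ := by
  apply (eigenCoord_bijective hσ.1 hρ.1).1
  ext j i
  rw [eigenCoord_cfc_mul, eigenCoord_sum_smul, ← Matrix.one_mul (cfc Real.sqrt ρ),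
    eigenCoord_mul_cfc]
  rcases (hσ.eigenvalues_nonneg j).eq_or_lt with hq | hq
  · have h0 := eigenCoord_right_eq_zero hσ.1 hρ.1 (i := i) hsupp hq.symm
    rw [eigenCoord_right] at h0
    rw [← hq, Real.sqrt_zero, Complex.ofReal_zero, zero_mul]
    rcases mul_eq_zero.1 h0 with h0 | h0
    · rw [h0, zero_mul]
    · rw [Complex.ofReal_eq_zero.1 h0, Real.sqrt_zero, Complex.ofReal_zero, mul_zero]
  rcases (hρ.eigenvalues_nonneg i).eq_or_lt with hp | hp
  · have hzero : ∀ t ∈ S, (c t : ℂ) * eigenCoord hσ.1 hρ.1 (Y t) j i = 0 := fun t ht => by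
      have h := (isModularResolvent_iff_eigenCoord hσ.1 hρ.1).1 (hY t ht) j i
      rw [eigenCoord_right, ← hp, Complex.ofReal_zero, mul_zero, mul_zero, add_zero] at h
      rw [(mul_eq_zero.1 h).resolve_left (Complex.ofReal_ne_zero.2 hq.ne'), mul_zero]
    rw [Finset.sum_eq_zero hzero, ← hp, Real.sqrt_zero, Complex.ofReal_zero, mul_zero, mul_zero]
  · have hx : 0 < nsRatio hσ.1 hρ.1 (i, j) := div_pos hq hp
    have hinterp : ∑ t ∈ S, (c t : ℂ) * eigenCoord hσ.1 hρ.1 (Y t) j i =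
        eigenCoord hσ.1 hρ.1 1 j i * (((√(nsRatio hσ.1 hρ.1 (i, j)))⁻¹ : ℝ) : ℂ) := by
      rw [← hc _ (hmem _ hx), Complex.ofReal_sum, Finset.mul_sum]
      refine Finset.sum_congr rfl fun t ht => ?_
      rw [(hY t ht).eigenCoord_eq hσ hρ (hS t ht) hp]
      push_cast
      ring
    have hsqrt : √(hσ.1.eigenvalues j) * (√(nsRatio hσ.1 hρ.1 (i, j)))⁻¹ =
        √(hρ.1.eigenvalues i) := by
      have := (Real.sqrt_pos.2 hq).ne'
      rw [nsRatio, Real.sqrt_div hq.le]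
      field_simp
    rw [hinterp, ← hsqrt]
    push_cast
    ring

end Positive

end Spectral

/-! ### Equality in the data processing inequality for restrictions to subalgebras -/

section Sylvester

variable {n : Type*} [Fintype n] {ρ σ : Matrix n n ℂ} {T : ℝ}

lemma sylvester_sub (Y Z : Matrix n n ℂ) :
    sylvester ρ σ T (Y - Z) = sylvester ρ σ T Y - sylvester ρ σ T Z := by
  simp only [sylvester, Matrix.mul_sub, Matrix.sub_mul, smul_sub]
  abel

lemma trace_conjTranspose_mul_sylvester (X Y : Matrix n n ℂ) :
    (Xᴴ * sylvester ρ σ T Y).trace = (σ * (Y * Xᴴ)).trace + T * (ρ * (Xᴴ * Y)).trace := by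
  rw [sylvester, Matrix.mul_add, trace_add, Matrix.mul_smul, trace_smul, smul_eq_mul,
    trace_mul_comm, Matrix.mul_assoc, ← Matrix.mul_assoc Xᴴ, trace_mul_comm (Xᴴ * Y)]

lemma star_trace_conjTranspose_mul_sylvester (hσ : σ.IsHermitian) (hρ : ρ.IsHermitian)
    (X Y : Matrix n n ℂ) :
    star (Xᴴ * sylvester ρ σ T Y).trace = (Yᴴ * sylvester ρ σ T X).trace := by
  have hstar (τ W : Matrix n n ℂ) (hτ : τ.IsHermitian) :
      star (τ * W).trace = (τ * Wᴴ).trace := by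
    rw [← trace_conjTranspose, conjTranspose_mul, hτ.eq, trace_mul_comm]
  rw [trace_conjTranspose_mul_sylvester, trace_conjTranspose_mul_sylvester, star_add, star_mul',
    hstar _ _ hσ, hstar _ _ hρ, Complex.star_def, Complex.conj_ofReal]
  simp only [conjTranspose_mul, conjTranspose_conjTranspose]

lemma trace_conjTranspose_mul_mul (X Y : Matrix n n ℂ) :
    (Yᴴ * X * Y).trace = (X * (Y * Yᴴ)).trace := by
  rw [Matrix.mul_assoc, trace_mul_comm, Matrix.mul_assoc]

lemma trace_mul_mul_conjTranspose (X Y : Matrix n n ℂ) :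
    (Y * X * Yᴴ).trace = (X * (Yᴴ * Y)).trace := by
  rw [Matrix.mul_assoc, trace_mul_comm, Matrix.mul_assoc]

lemma trace_conjTranspose_mul_sylvester_self_nonneg (hσ : σ.PosSemidef) (hρ : ρ.PosSemidef)
    (hT : 0 < T) (Y : Matrix n n ℂ) : 0 ≤ (Yᴴ * sylvester ρ σ T Y).trace := by
  rw [trace_conjTranspose_mul_sylvester, ← trace_conjTranspose_mul_mul,
    ← trace_mul_mul_conjTranspose]
  exact add_nonneg (hσ.conjTranspose_mul_mul_same Y).trace_nonneg
    (mul_nonneg (Complex.zero_le_real.2 hT.le) (hρ.mul_mul_conjTranspose_same Y).trace_nonneg)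

lemma sylvester_eq_zero_of_trace (hσ : σ.PosSemidef) (hρ : ρ.PosSemidef)
    (hT : 0 < T) {Y : Matrix n n ℂ} (h : (Yᴴ * sylvester ρ σ T Y).trace = 0) :
    sylvester ρ σ T Y = 0 := by
  rw [trace_conjTranspose_mul_sylvester, ← trace_conjTranspose_mul_mul,
    ← trace_mul_mul_conjTranspose,
    add_eq_zero_iff_of_nonneg (hσ.conjTranspose_mul_mul_same Y).trace_nonneg
    (mul_nonneg (Complex.zero_le_real.2 hT.le) (hρ.mul_mul_conjTranspose_same Y).trace_nonneg),
    mul_eq_zero, or_iff_right (Complex.ofReal_ne_zero.2 hT.ne')] at h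
  have hσY : σ * Y = 0 := posSemidef_mul_eq_zero_of_trace hσ h.1
  have hρY : ρ * Yᴴ = 0 := posSemidef_mul_eq_zero_of_trace hρ (by
    rw [conjTranspose_conjTranspose, h.2])
  have hYρ : Y * ρ = 0 := by
    rw [← conjTranspose_inj, conjTranspose_mul, hρ.1.eq, hρY, conjTranspose_zero]
  rw [sylvester, hσY, hYρ, smul_zero, add_zero]

end Sylvester

section Restriction

variable {m n : Type*} [Fintype m] [DecidableEq m] [Fintype n] [DecidableEq n]
  {Φ : Matrix m m ℂ →⋆ₐ[ℂ] Matrix n n ℂ} {ρ σ : Matrix n n ℂ} {ρ' σ' : Matrix m m ℂ}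

/-- `ρ'` is the density matrix of the functional `Tr ρ ·` restricted along the inclusion `Φ` of a
matrix algebra; when `Φ` is `X ↦ X ⊗ 1` this says that `ρ'` is a marginal of `ρ`. -/
def IsRestriction (Φ : Matrix m m ℂ →⋆ₐ[ℂ] Matrix n n ℂ) (ρ : Matrix n n ℂ)
    (ρ' : Matrix m m ℂ) : Prop :=
  ∀ Y, (ρ * Φ Y).trace = (ρ' * Y).trace

lemma map_conjTranspose (Φ : Matrix m m ℂ →⋆ₐ[ℂ] Matrix n n ℂ) (Y : Matrix m m ℂ) :
    Φ Yᴴ = (Φ Y)ᴴ :=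
  map_star Φ Y

lemma IsRestriction.isHermitian (h : IsRestriction Φ ρ ρ') (hρ : ρ.IsHermitian) :
    ρ'.IsHermitian := by
  refine ext_iff_trace_mul_right.2 fun Y => ?_
  rw [trace_mul_comm, ← conjTranspose_conjTranspose Y, ← conjTranspose_mul, trace_conjTranspose,
    ← h, map_conjTranspose, ← trace_conjTranspose, conjTranspose_mul, conjTranspose_conjTranspose,
    hρ.eq, trace_mul_comm, h, conjTranspose_conjTranspose]

lemma IsRestriction.posSemidef (h : IsRestriction Φ ρ ρ') (hρ : ρ.PosSemidef) :
    ρ'.PosSemidef := by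
  refine .of_dotProduct_mulVec_nonneg (h.isHermitian hρ.1) fun x => ?_
  have hquad : star x ⬝ᵥ ρ' *ᵥ x = (ρ * Φ (vecMulVec x (star x))).trace := by
    rw [h, mul_vecMulVec, trace_vecMulVec, dotProduct_comm]
  obtain ⟨F, hF⟩ :=
    exists_eq_conjTranspose_mul_self_of_posSemidef (posSemidef_vecMulVec_self_star x)
  rw [hquad, hF, map_mul, map_conjTranspose, ← trace_mul_mul_conjTranspose]
  exact (hρ.mul_mul_conjTranspose_same _).trace_nonneg

lemma IsRestriction.trace_eq (h : IsRestriction Φ ρ ρ') : ρ.trace = ρ'.trace := by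
  simpa only [map_one, Matrix.mul_one] using h 1

lemma IsRestriction.mul_map_eq_zero_iff (h : IsRestriction Φ ρ ρ') (hρ : ρ.PosSemidef)
    {N : Matrix m m ℂ} : ρ * Φ N = 0 ↔ ρ' * N = 0 := by
  have htrace : ((Φ N)ᴴ * ρ * Φ N).trace = (Nᴴ * ρ' * N).trace := by
    rw [Matrix.mul_assoc, Matrix.mul_assoc, trace_mul_comm, trace_mul_comm Nᴴ, Matrix.mul_assoc,
      Matrix.mul_assoc, ← map_conjTranspose, ← map_mul, h]
  refine ⟨fun h0 => posSemidef_mul_eq_zero_of_trace (h.posSemidef hρ) ?_,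
    fun h0 => posSemidef_mul_eq_zero_of_trace hρ ?_⟩
  · rw [← htrace, Matrix.mul_assoc, h0, Matrix.mul_zero, trace_zero]
  · rw [htrace, Matrix.mul_assoc, h0, Matrix.mul_zero, trace_zero]

lemma IsRestriction.suppProj_mul_map_one_sub (h : IsRestriction Φ σ σ') (hσ : σ.PosSemidef) :
    suppProj σ * Φ (1 - suppProj σ') = 0 := by
  refine suppProj_mul_eq_zero hσ.1 ((h.mul_map_eq_zero_iff hσ).2 ?_)
  rw [Matrix.mul_sub, Matrix.mul_one, mul_suppProj_self (h.isHermitian hσ.1), sub_self]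

lemma IsRestriction.suppProj_mul (hσσ' : IsRestriction Φ σ σ') (hρρ' : IsRestriction Φ ρ ρ')
    (hσ : σ.PosSemidef) (hρ : ρ.PosSemidef) (hsupp : suppProj σ * ρ = ρ) :
    suppProj σ' * ρ' = ρ' := by
  have hsupp' : ρ * suppProj σ = ρ := by
    rw [← conjTranspose_inj, conjTranspose_mul, (isHermitian_suppProj σ).eq, hρ.1.eq, hsupp]
  have hρN : ρ' * (1 - suppProj σ') = 0 := by
    rw [← hρρ'.mul_map_eq_zero_iff hρ, ← hsupp', Matrix.mul_assoc,
      hσσ'.suppProj_mul_map_one_sub hσ, Matrix.mul_zero]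
  rw [Matrix.mul_sub, Matrix.mul_one, sub_eq_zero] at hρN
  rw [← conjTranspose_inj, conjTranspose_mul, (isHermitian_suppProj σ').eq,
    (hρρ'.isHermitian hρ.1).eq, ← hρN]

lemma IsRestriction.cfc_mul_map_suppProj (h : IsRestriction Φ σ σ') (hσ : σ.PosSemidef)
    {f : ℝ → ℝ} (hf : f 0 = 0) :
    cfc f σ * Φ (suppProj σ') = cfc f σ := by
  have hN : cfc f σ * Φ (1 - suppProj σ') = 0 := by
    rw [← cfc_mul_suppProj hf, Matrix.mul_assoc, h.suppProj_mul_map_one_sub hσ, Matrix.mul_zero]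
  rw [map_sub, map_one, Matrix.mul_sub, Matrix.mul_one, sub_eq_zero] at hN
  exact hN.symm

lemma IsRestriction.trace_conjTranspose_mul_sylvester (hσσ' : IsRestriction Φ σ σ')
    (hρρ' : IsRestriction Φ ρ ρ') {T : ℝ} (X Y : Matrix m m ℂ) :
    ((Φ X)ᴴ * sylvester ρ σ T (Φ Y)).trace = (Xᴴ * sylvester ρ' σ' T Y).trace := by
  rw [_root_.trace_conjTranspose_mul_sylvester, _root_.trace_conjTranspose_mul_sylvester,
    ← map_conjTranspose, ← map_mul, ← map_mul, hσσ', hρρ']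

lemma IsModularResolvent.trace_conjTranspose_mul_sylvester_sub
    (hσσ' : IsRestriction Φ σ σ') (hρρ' : IsRestriction Φ ρ ρ')
    (hσ : σ.PosSemidef) (hρ : ρ.PosSemidef) {T : ℝ} (hT : 0 < T) {Y : Matrix n n ℂ}
    {Z : Matrix m m ℂ} (hY : IsModularResolvent ρ σ T Y) (hZ : IsModularResolvent ρ' σ' T Z) :
    ((Y - Φ Z)ᴴ * sylvester ρ σ T (Y - Φ Z)).trace = (ρ * Y).trace - (ρ' * Z).trace := by
  have hYY : (Yᴴ * ρ).trace = (ρ * Y).trace := by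
    nth_rw 1 [← hρ.1.eq]
    rw [← conjTranspose_mul, trace_conjTranspose, hY.trace_mul hσ hρ hT]
    exact Complex.conj_ofReal _
  have hZY : ((Φ Z)ᴴ * ρ).trace = (Zᴴ * ρ').trace := by
    rw [← map_conjTranspose, trace_mul_comm, hρρ', trace_mul_comm]
  have hYZ : (Yᴴ * sylvester ρ σ T (Φ Z)).trace = (ρ' * Z).trace := by
    rw [← star_trace_conjTranspose_mul_sylvester hσ.1 hρ.1, hY, ← trace_conjTranspose,
      conjTranspose_mul, conjTranspose_conjTranspose, hρ.1.eq, hρρ']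
  have hZZ : ((Φ Z)ᴴ * sylvester ρ σ T (Φ Z)).trace = (Zᴴ * ρ').trace := by
    rw [hσσ'.trace_conjTranspose_mul_sylvester hρρ', hZ]
  rw [sylvester_sub, conjTranspose_sub, Matrix.sub_mul, Matrix.mul_sub, Matrix.mul_sub, trace_sub,
    trace_sub, trace_sub, hYZ, hZZ, hY, hYY, hZY]
  ring

lemma IsModularResolvent.trace_mul_le_trace_mul (hσσ' : IsRestriction Φ σ σ')
    (hρρ' : IsRestriction Φ ρ ρ') (hσ : σ.PosSemidef) (hρ : ρ.PosSemidef) {T : ℝ} (hT : 0 < T)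
    {Y : Matrix n n ℂ} {Z : Matrix m m ℂ}
    (hY : IsModularResolvent ρ σ T Y) (hZ : IsModularResolvent ρ' σ' T Z) :
    (ρ' * Z).trace ≤ (ρ * Y).trace := by
  rw [← sub_nonneg, ← hY.trace_conjTranspose_mul_sylvester_sub hσσ' hρρ' hσ hρ hT hZ]
  exact trace_conjTranspose_mul_sylvester_self_nonneg hσ hρ hT _

lemma IsModularResolvent.map_of_trace_mul_eq (hσσ' : IsRestriction Φ σ σ')
    (hρρ' : IsRestriction Φ ρ ρ') (hσ : σ.PosSemidef) (hρ : ρ.PosSemidef) {T : ℝ} (hT : 0 < T)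
    {Y : Matrix n n ℂ} {Z : Matrix m m ℂ}
    (hY : IsModularResolvent ρ σ T Y) (hZ : IsModularResolvent ρ' σ' T Z)
    (h : (ρ * Y).trace = (ρ' * Z).trace) : IsModularResolvent ρ σ T (Φ Z) := by
  have hzero := hY.trace_conjTranspose_mul_sylvester_sub hσσ' hρρ' hσ hρ hT hZ
  rw [h, sub_self] at hzero
  have hsub := sylvester_eq_zero_of_trace hσ hρ hT hzero
  rw [sylvester_sub, sub_eq_zero] at hsub
  exact hsub.symm.trans hY

lemma IsRestriction.trace_mul_resolvent_eq (hσσ' : IsRestriction Φ σ σ')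
    (hρρ' : IsRestriction Φ ρ ρ') (hσ : σ.PosSemidef) (hρ : ρ.PosSemidef)
    (hsupp : suppProj σ * ρ = ρ) (hD : relEntropy ρ σ = relEntropy ρ' σ') {T : ℝ} (hT : 0 < T)
    {Y : Matrix n n ℂ} {Z : Matrix m m ℂ}
    (hY : IsModularResolvent ρ σ T Y) (hZ : IsModularResolvent ρ' σ' T Z) :
    (ρ * Y).trace = (ρ' * Z).trace := by
  have hσ' := hσσ'.posSemidef hσ
  have hρ' := hρρ'.posSemidef hρ
  have hsupp' := hσσ'.suppProj_mul hρρ' hσ hρ hsupp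
  have hmass : ∑ k, nsWeight hσ.1 hρ.1 k = ∑ k, nsWeight hσ'.1 hρ'.1 k := by
    rw [← Complex.ofReal_inj, ← trace_eq_sum_nsWeight_one, ← trace_eq_sum_nsWeight_one,
      hρρ'.trace_eq]
  rw [relEntropy_eq_sum hσ hρ hsupp, relEntropy_eq_sum hσ' hρ' hsupp', neg_inj] at hD
  rw [hY.trace_mul hσ hρ hT, hZ.trace_mul hσ' hρ' hT, Complex.ofReal_inj]
  refine sum_div_add_eq_of_le (fun _ => nsRatio_pos hσ hρ hsupp)
    (fun _ => nsRatio_pos hσ' hρ' hsupp') hmass hD (fun S hS => ?_) hT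
  obtain ⟨Y, hY⟩ := exists_isModularResolvent hσ hρ hsupp hS
  obtain ⟨Z, hZ⟩ := exists_isModularResolvent hσ' hρ' hsupp' hS
  rw [← Complex.real_le_real, ← hY.trace_mul hσ hρ hS, ← hZ.trace_mul hσ' hρ' hS]
  exact hY.trace_mul_le_trace_mul hσσ' hρρ' hσ hρ hS hZ

-- The square root is interpolated by resolvents, which `Φ` maps to resolvents.
theorem IsRestriction.cfc_sqrt_eq_of_relEntropy_eq (hσσ' : IsRestriction Φ σ σ')
    (hρρ' : IsRestriction Φ ρ ρ') (hσ : σ.PosSemidef) (hρ : ρ.PosSemidef)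
    (hsupp : suppProj σ * ρ = ρ) (hD : relEntropy ρ σ = relEntropy ρ' σ') :
    cfc Real.sqrt ρ =
      cfc Real.sqrt σ * Φ (cfc (fun x => (√x)⁻¹) σ' * cfc Real.sqrt ρ') := by
  have hσ' := hσσ'.posSemidef hσ
  have hρ' := hρρ'.posSemidef hρ
  have hsupp' := hσσ'.suppProj_mul hρρ' hσ hρ hsupp
  let S : Finset ℝ := (Finset.univ.image (nsRatio hσ.1 hρ.1) ∪
    Finset.univ.image (nsRatio hσ'.1 hρ'.1)).filter (0 < ·)
  have hS : ∀ t ∈ S, 0 < t := fun t ht => (Finset.mem_filter.1 ht).2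
  obtain ⟨c, hc⟩ := exists_sum_mul_inv_add_eq S hS fun x => (√x)⁻¹
  choose! Z hZ using fun t (ht : 0 < t) => exists_isModularResolvent hσ' hρ' hsupp' ht
  have hΦZ (t : ℝ) (ht : t ∈ S) : IsModularResolvent ρ σ t (Φ (Z t)) := by
    obtain ⟨Y, hY⟩ := exists_isModularResolvent hσ hρ hsupp (hS t ht)
    exact hY.map_of_trace_mul_eq hσσ' hρρ' hσ hρ (hS t ht) (hZ t (hS t ht))
      (hσσ'.trace_mul_resolvent_eq hρρ' hσ hρ hsupp hD (hS t ht) hY (hZ t (hS t ht)))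
  let W := ∑ t ∈ S, (c t : ℂ) • Z t
  have hW : cfc Real.sqrt σ' * W = cfc Real.sqrt ρ' := by
    refine cfc_sqrt_mul_sum_resolvent hσ' hρ' hsupp' hS (fun k hk => ?_) hc
      fun t ht => hZ t (hS t ht)
    exact Finset.mem_filter.2
      ⟨Finset.mem_union_right _ (Finset.mem_image_of_mem _ (Finset.mem_univ k)), hk⟩
  have hΦW : cfc Real.sqrt σ * Φ W = cfc Real.sqrt ρ := by
    simp only [W, map_sum, map_smul]
    refine cfc_sqrt_mul_sum_resolvent hσ hρ hsupp hS (fun k hk => ?_) hc hΦZ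
    exact Finset.mem_filter.2
      ⟨Finset.mem_union_left _ (Finset.mem_image_of_mem _ (Finset.mem_univ k)), hk⟩
  rw [← hW, ← Matrix.mul_assoc, cfc_inv_mul_cfc, map_mul, ← Matrix.mul_assoc,
    hσσ'.cfc_mul_map_suppProj hσ Real.sqrt_zero, hΦW]
  intro x hx
  exact Real.sqrt_eq_zero (nonneg_of_mem_spectrum hσ' hx)

/-- Petz's recovery map `ω ↦ σ^{1/2} Φ(σ'^{-1/2} ω σ'^{-1/2}) σ^{1/2}`, with the inverse square root
taken on the support of `σ'`. -/
def petzRecovery (Φ : Matrix m m ℂ →⋆ₐ[ℂ] Matrix n n ℂ) (σ : Matrix n n ℂ) (σ' : Matrix m m ℂ) :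
    Matrix m m ℂ →ₗ[ℂ] Matrix n n ℂ :=
  LinearMap.mulLeftRight ℂ (cfc Real.sqrt σ, cfc Real.sqrt σ) ∘ₗ Φ.toLinearMap ∘ₗ
    LinearMap.mulLeftRight ℂ (cfc (fun x => (√x)⁻¹) σ', cfc (fun x => (√x)⁻¹) σ')

lemma petzRecovery_apply (σ : Matrix n n ℂ) (σ' ω : Matrix m m ℂ) :
    petzRecovery Φ σ σ' ω = cfc Real.sqrt σ *
      Φ (cfc (fun x => (√x)⁻¹) σ' * ω * cfc (fun x => (√x)⁻¹) σ') * cfc Real.sqrt σ :=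
  rfl

lemma map_posSemidef {X : Matrix m m ℂ} (hX : X.PosSemidef) : (Φ X).PosSemidef := by
  obtain ⟨F, rfl⟩ := exists_eq_conjTranspose_mul_self_of_posSemidef hX
  rw [map_mul, map_conjTranspose]
  exact posSemidef_conjTranspose_mul_self _

lemma petzRecovery_posSemidef (σ : Matrix n n ℂ) (σ' : Matrix m m ℂ) {ω : Matrix m m ℂ}
    (hω : ω.PosSemidef) : (petzRecovery Φ σ σ' ω).PosSemidef := by
  have h := (map_posSemidef (Φ := Φ) (hω.mul_mul_conjTranspose_same
    (cfc (fun x => (√x)⁻¹) σ'))).mul_mul_conjTranspose_same (cfc Real.sqrt σ)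
  rwa [conjTranspose_cfc, conjTranspose_cfc] at h

theorem petzRecovery_eq_of_relEntropy_eq (hσσ' : IsRestriction Φ σ σ')
    (hρρ' : IsRestriction Φ ρ ρ') (hσ : σ.PosSemidef) (hρ : ρ.PosSemidef)
    (hsupp : suppProj σ * ρ = ρ) (hD : relEntropy ρ σ = relEntropy ρ' σ') :
    petzRecovery Φ σ σ' ρ' = ρ := by
  have hsqrt := hσσ'.cfc_sqrt_eq_of_relEntropy_eq hρρ' hσ hρ hsupp hD
  have hsqrt' := congrArg conjTranspose hsqrt
  rw [conjTranspose_mul, ← map_conjTranspose, conjTranspose_mul] at hsqrt'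
  simp only [conjTranspose_cfc] at hsqrt'
  rw [petzRecovery_apply, ← cfc_sqrt_mul_cfc_sqrt (hρρ'.posSemidef hρ)]
  refine Eq.trans ?_ (cfc_sqrt_mul_cfc_sqrt hρ)
  nth_rw 2 [hsqrt']
  rw [hsqrt]
  simp only [Matrix.mul_assoc, map_mul]

lemma trace_petzRecovery_mul_map (hσσ' : IsRestriction Φ σ σ') (hσ : σ.PosSemidef)
    {N ω : Matrix m m ℂ} (hN : Commute σ' N) (hΦN : Commute σ (Φ N))
    (hω : suppProj σ' * ω = ω) : (petzRecovery Φ σ σ' ω * Φ N).trace = (ω * N).trace := by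
  set r := cfc Real.sqrt σ with hr
  set s := cfc (fun x => (√x)⁻¹) σ' with hs
  have hrr : r * r = σ := cfc_sqrt_mul_cfc_sqrt hσ
  have hrN : r * Φ N = Φ N * r := (hΦN.cfc_real _).eq
  have hsN : s * N = N * s := (hN.cfc_real _).eq
  have hss : s * σ' * s = suppProj σ' := by
    have hσ' := hσσ'.posSemidef hσ
    nth_rw 1 [← cfc_id_eq_self hσ'.1]
    rw [hs, cfc_mul_cfc, cfc_mul_cfc]
    refine cfc_congr fun x hx => ?_
    rcases (nonneg_of_mem_spectrum hσ' hx).eq_or_lt with rfl | hx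
    · rw [if_pos rfl, mul_zero, zero_mul]
    · rw [if_neg hx.ne', mul_right_comm, ← mul_inv, Real.mul_self_sqrt hx.le,
        inv_mul_cancel₀ hx.ne']
  calc (petzRecovery Φ σ σ' ω * Φ N).trace
      = (r * (Φ (s * ω * s) * (r * Φ N))).trace := by
        rw [petzRecovery_apply]
        simp only [Matrix.mul_assoc, hr, hs]
    _ = (σ * Φ (s * ω * s * N)).trace := by
        rw [hrN, trace_mul_comm, map_mul Φ _ N, ← hrr, trace_mul_comm (r * r)]
        simp only [Matrix.mul_assoc]
    _ = (s * σ' * s * ω * N).trace := by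
        rw [hσσ', Matrix.mul_assoc (s * ω), hsN, ← Matrix.mul_assoc, ← Matrix.mul_assoc,
          trace_mul_comm]
        simp only [Matrix.mul_assoc]
    _ = (ω * N).trace := by rw [hss, hω]

lemma map_cfc (Φ : Matrix m m ℂ →⋆ₐ[ℂ] Matrix n n ℂ) (f : ℝ → ℝ) {X : Matrix m m ℂ}
    (hX : X.IsHermitian) : Φ (cfc f X) = cfc f (Φ X) :=
  StarAlgHomClass.map_cfc Φ f X (continuousOn_real_spectrum f X)
    (Φ.toLinearMap.continuous_of_finiteDimensional) hX (hX.isSelfAdjoint.map Φ)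

lemma IsRestriction.suppProj_map_mul (h : IsRestriction Φ ρ ρ') (hρ : ρ.PosSemidef) :
    suppProj (Φ ρ') * ρ = ρ := by
  have hN : ρ * Φ (1 - suppProj ρ') = 0 := by
    rw [h.mul_map_eq_zero_iff hρ, Matrix.mul_sub, Matrix.mul_one,
      mul_suppProj_self (h.isHermitian hρ.1), sub_self]
  rw [map_sub, map_one, Matrix.mul_sub, Matrix.mul_one, sub_eq_zero, suppProj,
    map_cfc Φ _ (h.isHermitian hρ.1)] at hN
  rw [suppProj, ← conjTranspose_inj, conjTranspose_mul, conjTranspose_cfc, hρ.1.eq]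
  exact hN.symm

lemma vonNeumannEntropy_mul_log_two (hρ : ρ.IsHermitian) :
    vonNeumannEntropy ρ * Real.log 2 = -(ρ * cfc Real.log ρ).trace.re := by
  obtain rfl : ‹DecidableEq n› = fun a b => Classical.propDecidable (a = b) := Subsingleton.elim _ _
  have hlog : Real.log 2 ≠ 0 := (Real.log_pos one_lt_two).ne'
  have hcfc : ρ * cfc Real.log ρ = cfc (fun x => x * Real.log x) ρ := by
    rw [← cfc_mul_cfc, cfc_id_eq_self hρ]
  rw [vonNeumannEntropy, dif_pos hρ, hcfc, trace_cfc hρ _, Complex.ofReal_re, Finset.sum_mul,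
    ← Finset.sum_neg_distrib]
  refine Finset.sum_congr rfl fun i _ => ?_
  rw [Real.logb, neg_mul, mul_assoc, div_mul_cancel₀ _ hlog]

lemma IsRestriction.relEntropy_map (h : IsRestriction Φ ρ ρ') (hρ : ρ.IsHermitian) :
    relEntropy ρ (Φ ρ') = (vonNeumannEntropy ρ' - vonNeumannEntropy ρ) * Real.log 2 := by
  rw [relEntropy, ← map_cfc Φ _ (h.isHermitian hρ), Matrix.mul_sub, trace_sub, h, Complex.sub_re,
    sub_mul, vonNeumannEntropy_mul_log_two hρ, vonNeumannEntropy_mul_log_two (h.isHermitian hρ)]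
  ring

end Restriction

section PartialTrace

variable {P Q n : Type*} [Fintype P] [Fintype Q] [Fintype n]

lemma trace_mul_one_kronecker [DecidableEq P] (X : Matrix (P × Q) (P × Q) ℂ) (M : Matrix Q Q ℂ) :
    (X * (1 ⊗ₖ M)).trace = (ptraceL X * M).trace := by
  simp only [trace, diag_apply, Matrix.mul_apply, Fintype.sum_prod_type_right,
    kroneckerMap_apply, ptraceL, one_apply, ite_mul, one_mul, zero_mul, mul_ite, mul_zero,
    Finset.sum_ite_eq', Finset.mem_univ, if_true, Finset.sum_mul]
  exact Finset.sum_congr rfl fun x _ => Finset.sum_comm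

lemma trace_mul_kronecker_one [DecidableEq Q] (X : Matrix (P × Q) (P × Q) ℂ) (N : Matrix P P ℂ) :
    (X * (N ⊗ₖ 1)).trace = (ptraceR X * N).trace := by
  simp only [trace, diag_apply, Matrix.mul_apply, Fintype.sum_prod_type,
    kroneckerMap_apply, ptraceR, one_apply, mul_ite, mul_one, mul_zero,
    Finset.sum_ite_eq', Finset.mem_univ, if_true, Finset.sum_mul]
  exact Finset.sum_congr rfl fun x _ => Finset.sum_comm

/-- The embedding `Y ↦ 1 ⊗ Y` of the matrix algebra of a tensor factor, where the identification
`e` of the index set with a product singles out the factor. -/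
def ampliation [DecidableEq P] [DecidableEq Q] [DecidableEq n] (e : n ≃ P × Q) :
    Matrix Q Q ℂ →⋆ₐ[ℂ] Matrix n n ℂ where
  toFun Y := ((1 : Matrix P P ℂ) ⊗ₖ Y).submatrix e e
  map_one' := by rw [one_kronecker_one, submatrix_one_equiv]
  map_mul' Y Z := by rw [submatrix_mul_equiv, ← mul_kronecker_mul, Matrix.mul_one]
  map_zero' := by rw [kronecker_zero, submatrix_zero]; rfl
  map_add' Y Z := by rw [kronecker_add]; rfl
  commutes' c := by
    simp only [Algebra.algebraMap_eq_smul_one, kronecker_smul, one_kronecker_one,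
      submatrix_smul, submatrix_one_equiv, Pi.smul_apply]
  map_star' Y := by
    simp only [star_eq_conjTranspose, conjTranspose_submatrix, conjTranspose_kronecker,
      conjTranspose_one]

lemma ampliation_apply [DecidableEq P] [DecidableEq Q] [DecidableEq n] (e : n ≃ P × Q)
    (Y : Matrix Q Q ℂ) : ampliation e Y = ((1 : Matrix P P ℂ) ⊗ₖ Y).submatrix e e :=
  rfl

lemma isRestriction_ampliation [DecidableEq P] [DecidableEq Q] [DecidableEq n] (e : n ≃ P × Q)
    (X : Matrix n n ℂ) : IsRestriction (ampliation e) X (ptraceL (X.submatrix e.symm e.symm)) := by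
  intro Y
  rw [← trace_mul_one_kronecker, ampliation_apply]
  calc (X * (1 ⊗ₖ Y).submatrix e e).trace
      = ((X * (1 ⊗ₖ Y).submatrix e e).submatrix e.symm e.symm).trace :=
        (e.symm.sum_comp (X * (1 ⊗ₖ Y).submatrix e e).diag).symm
    _ = (X.submatrix e.symm e.symm * (1 ⊗ₖ Y)).trace := by
        rw [← submatrix_mul_equiv X _ e.symm e.symm e.symm, submatrix_submatrix,
          e.self_comp_symm, submatrix_id_id]

end PartialTrace

section Tripartite

/-- The identification `A × B × E ≃ B × A × E`, which singles out the tensor factor `A × E`. -/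
def leftCommEquiv (A B E : Type*) : A × B × E ≃ B × A × E where
  toFun x := (x.2.1, x.1, x.2.2)
  invFun x := (x.2.1, x.1, x.2.2)

lemma isRestriction_margAE (ρ : Matrix (A × B × E) (A × B × E) ℂ) :
    IsRestriction (ampliation (leftCommEquiv A B E)) ρ (margAE ρ) :=
  isRestriction_ampliation (leftCommEquiv A B E) ρ

lemma isRestriction_margBE (ρ : Matrix (A × B × E) (A × B × E) ℂ) :
    IsRestriction (ampliation (Equiv.refl (A × B × E))) ρ (margBE ρ) :=
  isRestriction_ampliation (Equiv.refl (A × B × E)) ρ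

lemma isRestriction_margAE_margE (ρ : Matrix (A × B × E) (A × B × E) ℂ) :
    IsRestriction (ampliation (Equiv.refl (A × E))) (margAE ρ) (margE ρ) :=
  isRestriction_ampliation (Equiv.refl (A × E)) (margAE ρ)

lemma margAE_one_kronecker_margBE {P Q F : Type*} [Fintype P] [Fintype Q]
    (ρ : Matrix (P × Q × F) (P × Q × F) ℂ) :
    margAE ((1 : Matrix P P ℂ) ⊗ₖ margBE ρ) = (1 : Matrix P P ℂ) ⊗ₖ margE ρ := by
  ext x y
  change ∑ b, (1 : Matrix P P ℂ) x.1 y.1 * ∑ a, ρ (a, b, x.2) (a, b, y.2) =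
    (1 : Matrix P P ℂ) x.1 y.1 * ∑ a, ∑ b, ρ (a, b, x.2) (a, b, y.2)
  rw [← Finset.mul_sum, Finset.sum_comm]

lemma ampliation_kronecker_one (N : Matrix A A ℂ) :
    ampliation (leftCommEquiv A B E) (N ⊗ₖ (1 : Matrix E E ℂ)) =
      N ⊗ₖ (1 : Matrix (B × E) (B × E) ℂ) := by
  rw [← one_kronecker_one, ampliation_apply]
  ext x y
  simp only [submatrix_apply, leftCommEquiv, Equiv.coe_fn_mk, kroneckerMap_apply]
  ring

lemma commute_one_kronecker {P Q : Type*} [Fintype P] [DecidableEq P] [Fintype Q] [DecidableEq Q]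
    (N : Matrix P P ℂ) (M : Matrix Q Q ℂ) : Commute ((1 : Matrix P P ℂ) ⊗ₖ M) (N ⊗ₖ 1) := by
  rw [Commute, SemiconjBy, ← mul_kronecker_mul, ← mul_kronecker_mul, Matrix.one_mul,
    Matrix.mul_one, Matrix.one_mul, Matrix.mul_one]

lemma relEntropy_eq_of_condMutualInfo_eq_zero {ρ : Matrix (A × B × E) (A × B × E) ℂ}
    (hρ : ρ.PosSemidef) (h : condMutualInfo ρ = 0) :
    relEntropy ρ ((1 : Matrix A A ℂ) ⊗ₖ margBE ρ) =
      relEntropy (margAE ρ) ((1 : Matrix A A ℂ) ⊗ₖ margE ρ) := by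
  have hABE := (isRestriction_margBE ρ).relEntropy_map hρ.1
  have hAE := (isRestriction_margAE_margE ρ).relEntropy_map
    ((isRestriction_margAE ρ).isHermitian hρ.1)
  refine hABE.trans (Eq.trans ?_ hAE.symm)
  rw [condMutualInfo] at h
  rw [show vonNeumannEntropy (margBE ρ) - vonNeumannEntropy ρ =
    vonNeumannEntropy (margE ρ) - vonNeumannEntropy (margAE ρ) by linarith]

/-- `R` recovers an operator on `A ⊗ B ⊗ E` from its marginal `σ` on `A ⊗ E`, and leaves the
marginal on `A` of every part of `σ` undisturbed. -/
structure IsRecoveryMap (σ : Matrix (A × E) (A × E) ℂ)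
    (R : Matrix (A × E) (A × E) ℂ →ₗ[ℂ] Matrix (A × B × E) (A × B × E) ℂ) : Prop where
  posSemidef_map {ω} : ω.PosSemidef → (R ω).PosSemidef
  ptraceR_map {ω} : ω.PosSemidef → (σ - ω).PosSemidef → ptraceR (R ω) = ptraceR ω
  margAE_map : margAE (R σ) = σ

theorem exists_isRecoveryMap_of_condMutualInfo_eq_zero {ρ : Matrix (A × B × E) (A × B × E) ℂ}
    (hρ : ρ.PosSemidef) (h : condMutualInfo ρ = 0) :
    ∃ R : Matrix (A × E) (A × E) ℂ →ₗ[ℂ] Matrix (A × B × E) (A × B × E) ℂ,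
      IsRecoveryMap (margAE ρ) R ∧ R (margAE ρ) = ρ := by
  set σ := (1 : Matrix A A ℂ) ⊗ₖ margBE ρ
  set σ' := (1 : Matrix A A ℂ) ⊗ₖ margE ρ with hσ'def
  have hAE := isRestriction_margAE ρ
  have hσσ' : IsRestriction (ampliation (leftCommEquiv A B E)) σ σ' := by
    rw [hσ'def, ← margAE_one_kronecker_margBE]
    exact isRestriction_margAE σ
  have hσ : σ.PosSemidef := PosSemidef.one.kronecker ((isRestriction_margBE ρ).posSemidef hρ)
  have hsupp : suppProj σ * ρ = ρ := (isRestriction_margBE ρ).suppProj_map_mul hρ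
  have hsupp' : suppProj σ' * margAE ρ = margAE ρ :=
    (isRestriction_margAE_margE ρ).suppProj_map_mul (hAE.posSemidef hρ)
  have hrecover := petzRecovery_eq_of_relEntropy_eq hσσ' hAE hσ hρ hsupp
    (relEntropy_eq_of_condMutualInfo_eq_zero hρ h)
  refine ⟨petzRecovery (ampliation (leftCommEquiv A B E)) σ σ',
    ⟨petzRecovery_posSemidef σ σ', fun {ω} hω hωρ => ?_, congrArg margAE hrecover⟩, hrecover⟩
  refine Matrix.ext_iff_trace_mul_right.2 fun N => ?_
  rw [← trace_mul_kronecker_one, ← trace_mul_kronecker_one, ← ampliation_kronecker_one]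
  refine trace_petzRecovery_mul_map hσσ' hσ (commute_one_kronecker _ _) ?_
    (suppProj_mul_of_le hsupp' hω hωρ)
  rw [ampliation_kronecker_one]
  exact commute_one_kronecker _ _

end Tripartite

/-! ### Maximal convex decompositions -/

section ConvexGeometry

universe u

variable {V : Type u} [AddCommGroup V] [Module ℝ V] {K : Set V}

/-- The points `z i ∈ K` with weights `w i > 0` have barycentre `x`, and the average of `g` over
them is maximal. The competitors are given piecewise: each `z i` may be replaced by a finite
weighted family in `K` with barycentre `y i`, over which `g` has the average `r i`. -/
structure IsMaximalDecomposition {ι : Type*} [Fintype ι] (K : Set V) (g : V → ℝ) (x : V)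
    (w : ι → ℝ) (z : ι → V) : Prop where
  pos i : 0 < w i
  sum_weights : ∑ i, w i = 1
  mem i : z i ∈ K
  sum_smul : ∑ i, w i • z i = x
  eq_of_le (y : ι → V) (r : ι → ℝ) : (∀ i, (y i, r i) ∈ convexHull ℝ (K.graphOn g)) →
    ∑ i, w i • y i = x → (∀ i, g (z i) ≤ r i) → ∀ i, r i = g (z i)

variable [FiniteDimensional ℝ V]

lemma convexHull_eq_biUnion_image_stdSimplex_prod (K : Set V) :
    convexHull ℝ K = ⋃ n ∈ Set.Iic (Module.finrank ℝ V + 1),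
      (fun wz : (Fin n → ℝ) × (Fin n → V) => ∑ i, wz.1 i • wz.2 i) ''
        (stdSimplex ℝ (Fin n) ×ˢ Set.univ.pi fun _ => K) := by
  refine subset_antisymm (fun x hx => ?_) (Set.iUnion₂_subset fun n _ => ?_)
  · obtain ⟨ι, _, z, w, hz, hindep, hw, hw1, rfl⟩ := eq_pos_convex_span_of_mem_convexHull hx
    let e := (Fintype.equivFin ι).symm
    refine Set.mem_biUnion (x := Fintype.card ι)
      (hindep.card_le_finrank_succ.trans (Nat.succ_le_succ (Submodule.finrank_le _)))
      ⟨(w ∘ e, z ∘ e), ⟨⟨fun i => (hw _).le, ?_⟩, fun i _ => hz ⟨e i, rfl⟩⟩,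
        e.sum_comp fun i => w i • z i⟩
    rw [← hw1]
    exact e.sum_comp w
  · rintro _ ⟨⟨w, z⟩, ⟨⟨hw, hw1⟩, hz⟩, rfl⟩
    exact (convex_convexHull ℝ K).sum_mem (fun i _ => hw i) hw1 fun i _ =>
      subset_convexHull ℝ K (hz i (Set.mem_univ i))

variable [TopologicalSpace V] [IsTopologicalAddGroup V] [ContinuousSMul ℝ V]

lemma isCompact_convexHull_of_finiteDimensional (hK : IsCompact K) :
    IsCompact (convexHull ℝ K) := by
  rw [convexHull_eq_biUnion_image_stdSimplex_prod]
  refine (Set.finite_Iic _).isCompact_biUnion fun n _ =>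
    ((isCompact_stdSimplex ℝ (Fin n)).prod (isCompact_univ_pi fun _ => hK)).image ?_
  fun_prop

variable [T1Space V]

lemma exists_isGreatest_mem_convexHull_graphOn {g : V → ℝ} (hK : IsCompact K)
    (hg : ContinuousOn g K) {x : V} (hx : x ∈ convexHull ℝ K) :
    ∃ r, IsGreatest {r | (x, r) ∈ convexHull ℝ (K.graphOn g)} r := by
  have hcompact : IsCompact (convexHull ℝ (K.graphOn g)) :=
    isCompact_convexHull_of_finiteDimensional (hK.image_of_continuousOn (continuousOn_id.prodMk hg))
  have himage : {r | (x, r) ∈ convexHull ℝ (K.graphOn g)} =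
      Prod.snd '' (convexHull ℝ (K.graphOn g) ∩ Prod.fst ⁻¹' {x}) := by
    ext r
    simp
  have hfst : Prod.fst '' convexHull ℝ (K.graphOn g) = convexHull ℝ K := by
    rw [← LinearMap.coe_fst (R := ℝ), LinearMap.image_convexHull, LinearMap.coe_fst,
      Set.image_fst_graphOn]
  rw [himage]
  refine ((hcompact.inter_right (isClosed_singleton.preimage continuous_fst)).image
    continuous_snd).exists_isGreatest (Set.Nonempty.image _ ?_)
  rw [← hfst] at hx
  obtain ⟨y, hy, hyx⟩ := hx
  exact ⟨y, hy, hyx⟩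

theorem exists_isMaximalDecomposition {g : V → ℝ} (hK : IsCompact K)
    (hg : ContinuousOn g K) {x : V} (hx : x ∈ convexHull ℝ K) :
    ∃ (ι : Type u) (_ : Fintype ι) (w : ι → ℝ) (z : ι → V),
      IsMaximalDecomposition K g x w z := by
  obtain ⟨s, hs, hmax⟩ := exists_isGreatest_mem_convexHull_graphOn hK hg hx
  obtain ⟨ι, _, p, w, hp, -, hw, hw1, hsum⟩ := eq_pos_convex_span_of_mem_convexHull hs
  have hpK (i : ι) : (p i).1 ∈ K ∧ g (p i).1 = (p i).2 := by
    have := hp ⟨i, rfl⟩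
    simpa using this
  have hfst := congrArg Prod.fst hsum
  have hsnd := congrArg Prod.snd hsum
  simp only [Prod.fst_sum, Prod.snd_sum, Prod.smul_fst, Prod.smul_snd] at hfst hsnd
  refine ⟨ι, _, w, fun i => (p i).1, hw, hw1, fun i => (hpK i).1, hfst, fun y r hyr hy hle i => ?_⟩
  have hmem := (convex_convexHull ℝ (K.graphOn g)).sum_mem (fun i _ => (hw i).le) hw1
    fun i _ => hyr i
  have hpair : ∑ i, w i • (y i, r i) = (x, ∑ i, w i * r i) :=
    Prod.ext (by simp only [Prod.fst_sum, Prod.smul_fst, hy])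
      (by simp only [Prod.snd_sum, Prod.smul_snd, smul_eq_mul])
  rw [hpair] at hmem
  have hrs : ∑ i, w i * r i ≤ ∑ i, w i * g (p i).1 := by
    refine (hmax hmem).trans_eq ?_
    simp only [← hsnd, smul_eq_mul, (hpK _).2]
  have heq := (Finset.sum_eq_sum_iff_of_le fun i _ =>
    mul_le_mul_of_nonneg_left (hle i) (hw i).le).1
    (le_antisymm (Finset.sum_le_sum fun i _ => mul_le_mul_of_nonneg_left (hle i) (hw i).le) hrs)
  exact (mul_left_cancel₀ (hw i).ne' (heq i (Finset.mem_univ i))).symm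

end ConvexGeometry

/-! ### Separable states -/

section Separable

variable {P Q : Type*} [Fintype P] [Fintype Q]

/-- The set of pure states, the rank-one projections onto unit vectors. -/
def pureStates (P : Type*) [Fintype P] : Set (Matrix P P ℂ) :=
  outer '' {ψ | ∑ a, ‖ψ a‖ ^ 2 = 1}

/-- The set of separable states, the convex hull of the pure product states. -/
def separableStates (P Q : Type*) [Fintype P] [Fintype Q] : Set (Matrix (P × Q) (P × Q) ℂ) :=
  convexHull ℝ (Set.image2 kronecker (pureStates P) (pureStates Q))

lemma isCompact_pureStates (P : Type*) [Fintype P] : IsCompact (pureStates P) := by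
  have hsphere : {ψ : P → ℂ | ∑ a, ‖ψ a‖ ^ 2 = 1} =
      WithLp.ofLp '' Metric.sphere (0 : EuclideanSpace ℂ P) 1 := by
    refine Set.Subset.antisymm (fun ψ hψ => ⟨WithLp.toLp 2 ψ, ?_, rfl⟩) ?_
    · rw [mem_sphere_zero_iff_norm, EuclideanSpace.norm_eq, Real.sqrt_eq_one]
      exact hψ
    · rintro _ ⟨ψ, hψ, rfl⟩
      rwa [mem_sphere_zero_iff_norm, EuclideanSpace.norm_eq, Real.sqrt_eq_one] at hψ
  rw [pureStates, hsphere]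
  refine ((isCompact_sphere _ _).image (PiLp.continuous_ofLp 2 _)).image ?_
  unfold outer
  fun_prop

lemma isState_outer {ψ : P → ℂ} (hψ : ∑ a, ‖ψ a‖ ^ 2 = 1) : IsState (outer ψ) := by
  refine ⟨posSemidef_vecMulVec_self_star ψ, ?_⟩
  rw [outer, trace_vecMulVec, dotProduct]
  simp only [Pi.star_apply, RCLike.star_def, Complex.mul_conj']
  exact_mod_cast hψ

lemma convex_isState (P : Type*) [Fintype P] : Convex ℝ {ρ : Matrix P P ℂ | IsState ρ} := by
  intro ρ hρ σ hσ s t hs ht hst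
  refine ⟨(hρ.1.smul hs).add (hσ.1.smul ht), ?_⟩
  rw [trace_add, trace_smul, trace_smul, hρ.2, hσ.2, ← add_smul, hst, one_smul]

lemma eq_sum_eigenvalues_smul_outer {ρ : Matrix P P ℂ} (hρ : ρ.IsHermitian) :
    ρ = ∑ i, hρ.eigenvalues i • outer (WithLp.ofLp (hρ.eigenvectorBasis i)) := by
  have h := cfc_eq_mul_diagonal_mul hρ fun x => x
  rw [cfc_id_eq_self hρ] at h
  ext a b
  refine (congrFun₂ h a b).trans ?_
  rw [Matrix.mul_apply]
  simp only [mul_diagonal, Matrix.sum_apply, Matrix.smul_apply, outer,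
    vecMulVec_apply, Pi.star_apply, conjTranspose_apply, IsHermitian.eigenvectorUnitary_apply,
    Complex.real_smul]
  exact Finset.sum_congr rfl fun i _ => by ring

lemma convexHull_pureStates (P : Type*) [Fintype P] :
    convexHull ℝ (pureStates P) = {ρ | IsState ρ} := by
  refine subset_antisymm (convexHull_min ?_ (convex_isState P)) fun ρ ⟨hρ, htrace⟩ => ?_
  · rintro _ ⟨ψ, hψ, rfl⟩
    exact isState_outer hψ
  · rw [eq_sum_eigenvalues_smul_outer hρ.1]
    refine (convex_convexHull ℝ _).sum_mem (fun i _ => hρ.eigenvalues_nonneg i) ?_ fun i _ =>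
      subset_convexHull ℝ _ ⟨_, ?_, rfl⟩
    · have h := trace_cfc hρ.1 fun x => x
      rw [cfc_id_eq_self hρ.1, htrace] at h
      exact_mod_cast h.symm
    · have h := hρ.1.eigenvectorBasis.norm_eq_one i
      rw [EuclideanSpace.norm_eq, Real.sqrt_eq_one] at h
      exact h

lemma isCompact_isState (P : Type*) [Fintype P] : IsCompact {ρ : Matrix P P ℂ | IsState ρ} := by
  rw [← convexHull_pureStates]
  exact isCompact_convexHull_of_finiteDimensional (isCompact_pureStates P)

lemma kronecker_mem_separableStates {α : Matrix P P ℂ} {β : Matrix Q Q ℂ} (hα : IsState α)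
    (hβ : IsState β) : α ⊗ₖ β ∈ separableStates P Q := by
  have hβ' : ∀ π ∈ pureStates P, convexHull ℝ (pureStates Q) ⊆
      kroneckerBilinear (R := ℝ) π ⁻¹' separableStates P Q := fun π hπ =>
    convexHull_min (fun β hβ => subset_convexHull ℝ _ ⟨π, hπ, β, hβ, rfl⟩)
      ((convex_convexHull ℝ _).linear_preimage _)
  have hα' : convexHull ℝ (pureStates P) ⊆
      (kroneckerBilinear (R := ℝ)).flip β ⁻¹' separableStates P Q :=
    convexHull_min (fun π hπ => hβ' π hπ (by rwa [convexHull_pureStates]))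
      ((convex_convexHull ℝ _).linear_preimage _)
  exact hα' (by rwa [convexHull_pureStates])

lemma exists_pure_product_decomposition {ρ : Matrix (P × Q) (P × Q) ℂ}
    (hρ : ρ ∈ separableStates P Q) :
    ∃ (n : ℕ) (p : Fin n → ℝ) (ψ : Fin n → P → ℂ) (φ : Fin n → Q → ℂ),
      (∀ i, 0 ≤ p i) ∧ ∑ i, p i = 1 ∧
      (∀ i, ∑ a, ‖ψ i a‖ ^ 2 = 1) ∧ (∀ i, ∑ b, ‖φ i b‖ ^ 2 = 1) ∧
      ρ = ∑ i, (p i : ℂ) • (outer (ψ i) ⊗ₖ outer (φ i)) := by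
  obtain ⟨ι, _, w, z, hw, hw1, hz, rfl⟩ := mem_convexHull_iff_exists_fintype.1 hρ
  choose π hπ τ hτ hz using hz
  choose ψ hψ hπ using hπ
  choose φ hφ hτ using hτ
  let e := (Fintype.equivFin ι).symm
  refine ⟨Fintype.card ι, w ∘ e, ψ ∘ e, φ ∘ e, fun i => hw _, (e.sum_comp w).trans hw1,
    fun i => hψ _, fun i => hφ _, ?_⟩
  rw [← e.sum_comp fun i => w i • z i]
  refine Finset.sum_congr rfl fun i _ => ?_
  rw [← hz, ← hπ, ← hτ, Complex.coe_smul]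
  rfl

end Separable

/-! ### Measurements on one factor -/

section Effects

variable {P Q : Type*} [Fintype P] [Fintype Q]

lemma isLinearMap_ptraceR (S : Type*) [Semiring S] [Module S ℂ] :
    IsLinearMap S (ptraceR : Matrix (P × Q) (P × Q) ℂ → Matrix P P ℂ) where
  map_add X Y := by
    ext i j
    exact Finset.sum_add_distrib
  map_smul c X := by
    ext i j
    exact (Finset.smul_sum (r := c) (f := fun b => X (i, b) (j, b))).symm

lemma trace_ptraceR (X : Matrix (P × Q) (P × Q) ℂ) : (ptraceR X).trace = X.trace :=
  (Fintype.sum_prod_type fun x => X x x).symm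

lemma trace_ptraceL (X : Matrix (P × Q) (P × Q) ℂ) : (ptraceL X).trace = X.trace :=
  (Fintype.sum_prod_type_right fun x => X x x).symm

/-- The effects, the quantum `[0, 1]`-valued observables. -/
def effects (Q : Type*) [Fintype Q] : Set (Matrix Q Q ℂ) :=
  {M | M.PosSemidef ∧ (1 - M).PosSemidef}

open scoped Matrix.Norms.L2Operator MatrixOrder in
lemma span_effects (Q : Type*) [Fintype Q] : Submodule.span ℂ (effects Q) = ⊤ := by
  rw [← CStarAlgebra.span_nonneg_inter_unitClosedBall]
  congr 1
  ext M
  rw [effects, Set.mem_ofPred_eq, ← nonneg_iff_posSemidef, ← le_iff]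
  refine and_congr_right fun hM => ?_
  rw [mem_closedBall_zero_iff, CStarAlgebra.norm_le_one_iff_of_nonneg M hM]

lemma ptraceL_posSemidef {X : Matrix (P × Q) (P × Q) ℂ} (hX : X.PosSemidef) :
    (ptraceL X).PosSemidef :=
  (isRestriction_ampliation (Equiv.refl (P × Q)) X).posSemidef hX

lemma ptraceR_posSemidef {X : Matrix (P × Q) (P × Q) ℂ} (hX : X.PosSemidef) :
    (ptraceR X).PosSemidef :=
  ptraceL_posSemidef (hX.submatrix (Equiv.prodComm P Q).symm)

lemma ptraceL_kronecker_one_mul_posSemidef [DecidableEq Q] {M : Matrix P P ℂ}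
    {X : Matrix (P × Q) (P × Q) ℂ} (hM : M.PosSemidef) (hX : X.PosSemidef) :
    (ptraceL ((M ⊗ₖ 1) * X)).PosSemidef := by
  obtain ⟨F, rfl⟩ := exists_eq_conjTranspose_mul_self_of_posSemidef hM
  have hcyc : ptraceL (((Fᴴ * F) ⊗ₖ 1) * X) =
      ptraceL ((F ⊗ₖ (1 : Matrix Q Q ℂ)) * X * (F ⊗ₖ (1 : Matrix Q Q ℂ))ᴴ) := by
    refine Matrix.ext_iff_trace_mul_right.2 fun N => ?_
    have hFF : (Fᴴ * F) ⊗ₖ (1 : Matrix Q Q ℂ) =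
        (F ⊗ₖ (1 : Matrix Q Q ℂ))ᴴ * (F ⊗ₖ (1 : Matrix Q Q ℂ)) := by
      rw [conjTranspose_kronecker, conjTranspose_one, ← mul_kronecker_mul, Matrix.one_mul]
    have hcomm := (commute_one_kronecker Fᴴ N).eq
    rw [← trace_mul_one_kronecker, ← trace_mul_one_kronecker, hFF, Matrix.mul_assoc,
      Matrix.mul_assoc, trace_mul_comm, conjTranspose_kronecker, conjTranspose_one,
      Matrix.mul_assoc, Matrix.mul_assoc, Matrix.mul_assoc, hcomm]
    simp only [Matrix.mul_assoc]
  rw [hcyc]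
  exact ptraceL_posSemidef (hX.mul_mul_conjTranspose_same _)

lemma ptraceL_kronecker_one_mul_add [DecidableEq P] [DecidableEq Q] (M : Matrix P P ℂ)
    (X : Matrix (P × Q) (P × Q) ℂ) :
    ptraceL ((M ⊗ₖ 1) * X) + ptraceL (((1 - M) ⊗ₖ 1) * X) = ptraceL X := by
  refine Matrix.ext_iff_trace_mul_right.2 fun N => ?_
  rw [Matrix.add_mul, trace_add, ← trace_mul_one_kronecker, ← trace_mul_one_kronecker,
    ← trace_add, ← Matrix.add_mul, ← Matrix.add_mul, ← add_kronecker, add_sub_cancel,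
    one_kronecker_one, Matrix.one_mul, trace_mul_one_kronecker]

lemma eq_kronecker_of_forall_effects {X : Matrix (P × Q) (P × Q) ℂ}
    (h : ∀ M ∈ effects Q, ptraceR ((1 ⊗ₖ M) * X) = ((1 ⊗ₖ M) * X).trace • ptraceR X) :
    X = ptraceR X ⊗ₖ ptraceL X := by
  have hall (M : Matrix Q Q ℂ) :
      ptraceR ((1 ⊗ₖ M) * X) = ((1 ⊗ₖ M) * X).trace • ptraceR X := by
    have hM : M ∈ Submodule.span ℂ (effects Q) := span_effects Q ▸ Submodule.mem_top
    induction hM using Submodule.span_induction with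
    | mem M hM => exact h M hM
    | zero =>
      rw [kronecker_zero, Matrix.zero_mul, trace_zero, zero_smul, (isLinearMap_ptraceR ℂ).map_zero]
    | add M N _ _ hM hN =>
      rw [kronecker_add, Matrix.add_mul, (isLinearMap_ptraceR ℂ).map_add, hM, hN, trace_add,
        add_smul]
    | smul c M _ hM =>
      rw [kronecker_smul, smul_mul, (isLinearMap_ptraceR ℂ).map_smul, hM, trace_smul, smul_assoc]
  ext ⟨a, b⟩ ⟨a', b'⟩
  have hentry (x y : P) : ptraceR ((1 ⊗ₖ single b' b 1) * X) x y = X (x, b) (y, b') := by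
    simp [ptraceR, Matrix.mul_apply, Fintype.sum_prod_type, one_apply, single_apply, ite_and]
  have hsingle := congrFun₂ (hall (single b' b 1)) a a'
  rw [hentry, Matrix.smul_apply, ← trace_ptraceR] at hsingle
  simp only [trace, diag_apply, hentry] at hsingle
  rw [hsingle, smul_eq_mul, mul_comm, kroneckerMap_apply]
  rfl

lemma isLinearMap_margAE {P Q F : Type*} [Fintype Q] (S : Type*) [Semiring S] [Module S ℂ] :
    IsLinearMap S (margAE : Matrix (P × Q × F) (P × Q × F) ℂ → _) where
  map_add X Y := by
    ext x y
    exact Finset.sum_add_distrib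
  map_smul c X := by
    ext x y
    exact (Finset.smul_sum (r := c) (f := fun b => X (x.1, b, x.2) (y.1, b, y.2))).symm

lemma isLinearMap_margAB {P Q F : Type*} [Fintype F] (S : Type*) [Semiring S] [Module S ℂ] :
    IsLinearMap S (margAB : Matrix (P × Q × F) (P × Q × F) ℂ → _) where
  map_add X Y := by
    ext x y
    exact Finset.sum_add_distrib
  map_smul c X := by
    ext x y
    exact (Finset.smul_sum (r := c) (f := fun e => X (x.1, x.2, e) (y.1, y.2, e))).symm

lemma ptraceR_margAE (Z : Matrix (A × B × E) (A × B × E) ℂ) : ptraceR (margAE Z) = ptraceR Z := by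
  ext a a'
  exact (Fintype.sum_prod_type_right fun x => Z (a, x) (a', x)).symm

lemma ptraceR_margAB (Z : Matrix (A × B × E) (A × B × E) ℂ) : ptraceR (margAB Z) = ptraceR Z := by
  ext a a'
  exact (Fintype.sum_prod_type fun x => Z (a, x) (a', x)).symm

lemma margAB_posSemidef {P Q F : Type*} [Fintype F] {Z : Matrix (P × Q × F) (P × Q × F) ℂ}
    (hZ : Z.PosSemidef) : (margAB Z).PosSemidef := by
  have hsum : margAB Z = ∑ e, Z.submatrix (fun x => (x.1, x.2, e)) fun x => (x.1, x.2, e) := by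
    ext x y
    simp only [margAB, Matrix.sum_apply, submatrix_apply]
  rw [hsum]
  exact posSemidef_sum _ fun e _ => hZ.submatrix _

/-- The unnormalised state of `A ⊗ E` after the effect `M` has been observed on `B`. -/
def effectMarginal (M : Matrix B B ℂ) (Z : Matrix (A × B × E) (A × B × E) ℂ) :
    Matrix (A × E) (A × E) ℂ :=
  ptraceL ((M ⊗ₖ 1) * Z.submatrix (leftCommEquiv A B E).symm (leftCommEquiv A B E).symm)

lemma effectMarginal_posSemidef {M : Matrix B B ℂ} {Z : Matrix (A × B × E) (A × B × E) ℂ}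
    (hM : M.PosSemidef) (hZ : Z.PosSemidef) : (effectMarginal M Z).PosSemidef :=
  ptraceL_kronecker_one_mul_posSemidef hM (hZ.submatrix _)

lemma effectMarginal_add_effectMarginal_one_sub (M : Matrix B B ℂ)
    (Z : Matrix (A × B × E) (A × B × E) ℂ) :
    effectMarginal M Z + effectMarginal (1 - M) Z = margAE Z :=
  ptraceL_kronecker_one_mul_add M _

lemma ptraceR_effectMarginal (M : Matrix B B ℂ) (Z : Matrix (A × B × E) (A × B × E) ℂ) :
    ptraceR (effectMarginal M Z) = ptraceR ((1 ⊗ₖ M) * margAB Z) := by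
  ext a a'
  have hl : ptraceR (effectMarginal M Z) a a' =
      ∑ e, ∑ b, ∑ b', M b b' * Z (a, b', e) (a', b, e) := by
    simp [ptraceR, effectMarginal, ptraceL, Matrix.mul_apply, Fintype.sum_prod_type, one_apply,
      leftCommEquiv]
  have hr : ptraceR ((1 ⊗ₖ M) * margAB Z) a a' =
      ∑ b, ∑ b', ∑ e, M b b' * Z (a, b', e) (a', b, e) := by
    simp [ptraceR, Matrix.mul_apply, Fintype.sum_prod_type, one_apply, margAB, Finset.mul_sum]
  rw [hl, hr, Finset.sum_comm]
  exact Finset.sum_congr rfl fun b _ => Finset.sum_comm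

end Effects

/-! ### Strict convexity of the Hilbert–Schmidt norm -/

section ExtremalDecomposition

variable {P Q : Type*} [Fintype P] [Fintype Q]

/-- The squared Hilbert–Schmidt norm. It serves as a strictly convex function of states. -/
def hsNormSq (X : Matrix P P ℂ) : ℝ :=
  ∑ i, ∑ j, ‖X i j‖ ^ 2

lemma hsNormSq_nonneg {X : Matrix P P ℂ} : 0 ≤ hsNormSq X :=
  Finset.sum_nonneg fun _ _ => Finset.sum_nonneg fun _ _ => sq_nonneg _

lemma hsNormSq_eq_zero {X : Matrix P P ℂ} : hsNormSq X = 0 ↔ X = 0 := by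
  have hrow (i : P) : 0 ≤ ∑ j, ‖X i j‖ ^ 2 := Finset.sum_nonneg fun _ _ => sq_nonneg _
  simp only [hsNormSq, Finset.sum_eq_zero_iff_of_nonneg fun i _ => hrow i,
    Finset.sum_eq_zero_iff_of_nonneg fun _ _ => sq_nonneg _, Finset.mem_univ, true_imp_iff,
    sq_eq_zero_iff, norm_eq_zero, ← Matrix.ext_iff, Matrix.zero_apply]

lemma hsNormSq_convexCombination {s t : ℝ} (hst : s + t = 1) (X Y : Matrix P P ℂ) :
    s * hsNormSq X + t * hsNormSq Y = hsNormSq (s • X + t • Y) + s * t * hsNormSq (X - Y) := by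
  have hentry (x y : ℂ) :
      s * ‖x‖ ^ 2 + t * ‖y‖ ^ 2 = ‖s • x + t • y‖ ^ 2 + s * t * ‖x - y‖ ^ 2 := by
    obtain rfl : t = 1 - s := by linarith
    simp only [← Complex.normSq_eq_norm_sq, Complex.normSq_apply, Complex.add_re, Complex.add_im,
      Complex.sub_re, Complex.sub_im, Complex.real_smul, Complex.re_ofReal_mul,
      Complex.im_ofReal_mul]
    ring
  simp only [hsNormSq, Finset.mul_sum, ← Finset.sum_add_distrib, hentry, Matrix.add_apply,
    Matrix.sub_apply, Matrix.smul_apply]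

lemma continuous_hsNormSq_ptraceR :
    Continuous fun ω : Matrix (P × Q) (P × Q) ℂ => hsNormSq (ptraceR ω) := by
  unfold hsNormSq ptraceR
  fun_prop

lemma exists_eq_smul_isState {τ ω : Matrix P P ℂ} (hτ : IsState τ) (hω : ω.PosSemidef) :
    ∃ (s : ℝ) (x : Matrix P P ℂ), 0 ≤ s ∧ IsState x ∧ ω = s • x := by
  obtain ⟨s, hs, htrace⟩ := RCLike.nonneg_iff_exists_ofReal.1 hω.trace_nonneg
  by_cases h : s = 0
  · refine ⟨0, τ, le_rfl, hτ, ?_⟩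
    rw [zero_smul, ← hω.trace_eq_zero_iff, ← htrace, h, RCLike.ofReal_zero]
  · refine ⟨s, s⁻¹ • ω, hs, ⟨hω.smul (inv_nonneg.2 hs), ?_⟩, (smul_inv_smul₀ h ω).symm⟩
    rw [trace_smul, ← htrace, RCLike.real_smul_ofReal, ← RCLike.ofReal_mul, inv_mul_cancel₀ h,
      RCLike.ofReal_one]

lemma exists_mem_convexHull_graphOn_of_add {ω₁ ω₀ : Matrix (P × Q) (P × Q) ℂ}
    (h₁ : ω₁.PosSemidef) (h₀ : ω₀.PosSemidef) (htrace : (ω₁ + ω₀).trace = 1) :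
    ∃ r, (ω₁ + ω₀, r) ∈ convexHull ℝ
        ({ω | IsState ω}.graphOn fun ω => hsNormSq (ptraceR ω)) ∧
      hsNormSq (ptraceR (ω₁ + ω₀)) ≤ r ∧
      (r = hsNormSq (ptraceR (ω₁ + ω₀)) → ptraceR ω₁ = ω₁.trace • ptraceR (ω₁ + ω₀)) := by
  have hstate : IsState (ω₁ + ω₀) := ⟨h₁.add h₀, htrace⟩
  obtain ⟨s, x₁, hs, hx₁, rfl⟩ := exists_eq_smul_isState hstate h₁
  obtain ⟨t, x₀, ht, hx₀, rfl⟩ := exists_eq_smul_isState hstate h₀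
  have hst : s + t = 1 := by
    rw [trace_add, trace_smul, trace_smul, hx₁.2, hx₀.2, Complex.real_smul, Complex.real_smul,
      mul_one, mul_one] at htrace
    exact_mod_cast htrace
  have hlin := isLinearMap_ptraceR (P := P) (Q := Q) ℝ
  have hgap := hsNormSq_convexCombination hst (ptraceR x₁) (ptraceR x₀)
  have hgraph {x : Matrix (P × Q) (P × Q) ℂ} (hx : IsState x) :
      (x, hsNormSq (ptraceR x)) ∈
        convexHull ℝ ({ω | IsState ω}.graphOn fun ω => hsNormSq (ptraceR ω)) :=
    subset_convexHull ℝ _ ⟨x, hx, rfl⟩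
  refine ⟨s * hsNormSq (ptraceR x₁) + t * hsNormSq (ptraceR x₀), ?_, ?_, fun heq => ?_⟩
  · exact convex_convexHull ℝ _ (hgraph hx₁) (hgraph hx₀) hs ht hst
  · rw [hlin.map_add, hlin.map_smul, hlin.map_smul, hgap]
    exact le_add_of_nonneg_right (mul_nonneg (mul_nonneg hs ht) hsNormSq_nonneg)
  · rw [hlin.map_add, hlin.map_smul, hlin.map_smul, hgap, add_eq_left, mul_eq_zero,
      hsNormSq_eq_zero, ← smul_eq_zero] at heq
    rw [trace_smul, hx₁.2, smul_assoc, one_smul, hlin.map_add, hlin.map_smul, hlin.map_smul]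
    obtain rfl : t = 1 - s := by linarith
    rw [← sub_eq_zero, ← smul_zero (1 : ℝ), ← heq]
    module

end ExtremalDecomposition

/-! ### Separability from a recovery map -/

section Recovery

lemma IsMaximalDecomposition.posSemidef_sub {P ι : Type*} [Fintype P] [Fintype ι]
    {g : Matrix P P ℂ → ℝ} {σ : Matrix P P ℂ} {w : ι → ℝ} {τ : ι → Matrix P P ℂ}
    (h : IsMaximalDecomposition {ω | IsState ω} g σ w τ) (i : ι) :
    (σ - w i • τ i).PosSemidef := by
  rw [← h.sum_smul, ← Finset.sum_erase_eq_sub (Finset.mem_univ i)]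
  exact posSemidef_sum _ fun j _ => (h.mem j).1.smul (h.pos j).le

variable {ι : Type*} [Fintype ι] {w : ι → ℝ} {τ : ι → Matrix (A × E) (A × E) ℂ}
  {R : Matrix (A × E) (A × E) ℂ →ₗ[ℂ] Matrix (A × B × E) (A × B × E) ℂ}
  {σ : Matrix (A × E) (A × E) ℂ}

lemma IsRecoveryMap.ptraceR_map_piece (hR : IsRecoveryMap σ R) {g : Matrix (A × E) (A × E) ℂ → ℝ}
    (h : IsMaximalDecomposition {ω | IsState ω} g σ w τ) (i : ι) :
    ptraceR (R (τ i)) = ptraceR (τ i) := by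
  have hscaled := hR.ptraceR_map ((h.mem i).1.smul (h.pos i).le) (h.posSemidef_sub i)
  rw [LinearMap.map_smul_of_tower, (isLinearMap_ptraceR ℝ).map_smul,
    (isLinearMap_ptraceR ℝ).map_smul] at hscaled
  exact smul_right_injective _ (h.pos i).ne' hscaled

/-- The two outcomes of the measurement `{M, 1 - M}` refine the decomposition of `σ`; by maximality
the refinement does not separate the marginals on `A`. -/
lemma IsRecoveryMap.ptraceR_effectMarginal_map_piece (hR : IsRecoveryMap σ R)
    (h : IsMaximalDecomposition {ω | IsState ω} (fun ω => hsNormSq (ptraceR ω)) σ w τ)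
    {M : Matrix B B ℂ} (hM : M ∈ effects B) (i : ι) :
    ptraceR (effectMarginal M (R (τ i))) =
      (effectMarginal M (R (τ i))).trace • ptraceR (τ i) := by
  have hmarg (j : ι) : ptraceR (margAE (R (τ j))) = ptraceR (τ j) :=
    (ptraceR_margAE _).trans (hR.ptraceR_map_piece h j)
  have htrace (j : ι) : (margAE (R (τ j))).trace = 1 := by
    rw [← trace_ptraceR, hmarg, trace_ptraceR, (h.mem j).2]
  have hbarycentre : ∑ j, w j • margAE (R (τ j)) = σ := by
    let L := (isLinearMap_margAE ℝ).mk' margAE ∘ₗ R.restrictScalars ℝ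
    calc ∑ j, w j • L (τ j) = L (∑ j, w j • τ j) := by simp only [map_sum, map_smul]
      _ = σ := by rw [h.sum_smul]; exact hR.margAE_map
  have hsplit (j : ι) := exists_mem_convexHull_graphOn_of_add
    (effectMarginal_posSemidef hM.1 (hR.posSemidef_map (h.mem j).1))
    (effectMarginal_posSemidef hM.2 (hR.posSemidef_map (h.mem j).1))
    ((congrArg trace (effectMarginal_add_effectMarginal_one_sub M _)).trans (htrace j))
  simp only [effectMarginal_add_effectMarginal_one_sub, hmarg] at hsplit
  choose r hgraph hle heq using hsplit
  exact heq i (h.eq_of_le _ r hgraph hbarycentre hle i)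

lemma IsRecoveryMap.margAB_map_piece_mem_separableStates (hR : IsRecoveryMap σ R)
    (h : IsMaximalDecomposition {ω | IsState ω} (fun ω => hsNormSq (ptraceR ω)) σ w τ) (i : ι) :
    margAB (R (τ i)) ∈ separableStates A B := by
  have hmarg : ptraceR (margAB (R (τ i))) = ptraceR (τ i) :=
    (ptraceR_margAB _).trans (hR.ptraceR_map_piece h i)
  have hprod := eq_kronecker_of_forall_effects (X := margAB (R (τ i))) fun M hM => by
    rw [hmarg, ← trace_ptraceR, ← ptraceR_effectMarginal, trace_ptraceR,
      hR.ptraceR_effectMarginal_map_piece h hM]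
  have hpos := margAB_posSemidef (hR.posSemidef_map (h.mem i).1)
  have htrace : (margAB (R (τ i))).trace = 1 := by
    rw [← trace_ptraceR, hmarg, trace_ptraceR, (h.mem i).2]
  rw [hprod]
  exact kronecker_mem_separableStates
    ⟨ptraceR_posSemidef hpos, (trace_ptraceR _).trans htrace⟩
    ⟨ptraceL_posSemidef hpos, (trace_ptraceL _).trans htrace⟩

theorem IsRecoveryMap.margAB_map_mem_separableStates (hR : IsRecoveryMap σ R) (hσ : IsState σ) :
    margAB (R σ) ∈ separableStates A B := by
  obtain ⟨ι, _, w, τ, h⟩ := exists_isMaximalDecomposition (isCompact_isState (A × E))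
    continuous_hsNormSq_ptraceR.continuousOn (subset_convexHull ℝ _ hσ)
  let L := (isLinearMap_margAB ℝ).mk' margAB ∘ₗ R.restrictScalars ℝ
  have hsum : L σ = ∑ i, w i • L (τ i) := by
    simp only [← h.sum_smul, map_sum, map_smul]
  change L σ ∈ _
  rw [hsum]
  exact (convex_convexHull ℝ _).sum_mem (fun i _ => (h.pos i).le) h.sum_weights fun i _ =>
    hR.margAB_map_piece_mem_separableStates h i

end Recovery

/-- If a state `ρ^{AB}` admits a finite-dimensional extension `ρ^{ABE}` with
vanishing quantum conditional mutual information `I(A;B|E) = 0`, then `ρ^{AB}` is separable. -/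
theorem separable_of_condMutualInfo_eq_zero
    {A B E : Type*} [Fintype A] [Fintype B] [Fintype E]
    (ρ : Matrix (A × B) (A × B) ℂ)
    (ρE : Matrix (A × B × E) (A × B × E) ℂ)
    (hρE : IsState ρE) (hext : margAB ρE = ρ)
    (hcmi : condMutualInfo ρE = 0) :
    ∃ (n : ℕ) (p : Fin n → ℝ) (ψ : Fin n → A → ℂ) (φ : Fin n → B → ℂ),
      (∀ i, 0 ≤ p i) ∧ (∑ i, p i) = 1 ∧
      (∀ i, ∑ a, ‖ψ i a‖ ^ 2 = 1) ∧ (∀ i, ∑ b, ‖φ i b‖ ^ 2 = 1) ∧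
      ρ = ∑ i, (p i : ℂ) • (outer (ψ i) ⊗ₖ outer (φ i)) := by
  obtain ⟨R, hR, hfix⟩ := exists_isRecoveryMap_of_condMutualInfo_eq_zero hρE.1 hcmi
  have hσ : IsState (margAE ρE) := by
    refine ⟨(isRestriction_margAE ρE).posSemidef hρE.1, ?_⟩
    rw [← trace_ptraceR, ptraceR_margAE, trace_ptraceR, hρE.2]
  have hsep := hR.margAB_map_mem_separableStates hσ
  rw [hfix, hext] at hsep
  exact exists_pure_product_decomposition hsep

end
end

section
/- Let σ^{AB} = (1/3)(|I⟩⟨I| + |II⟩⟨II| + |III⟩⟨III|) be the totally antisymmetric two-qutrit state on ℂ³ ⊗ ℂ³, where |I⟩ = (|2⟩|3⟩ - |3⟩|2⟩)/√2, |II⟩ = (|3⟩|1⟩ - |1⟩|3⟩)/√2, |III⟩ = (|1⟩|2⟩ - |2⟩|1⟩)/√2 for an orthonormal basis |1⟩,|2⟩,|3⟩ of ℂ³. Then E_sq(σ^{AB}) ≤ (1/2) log₂ 3. -/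
open Matrix BigOperators Kronecker
open scoped Classical ComplexOrder

noncomputable section

variable {A B E : Type*} [Fintype A] [Fintype B] [Fintype E]

/-- The vector `|I⟩ = (|2⟩|3⟩ - |3⟩|2⟩)/√2`, with basis `|1⟩,|2⟩,|3⟩` identified with
`0,1,2 : Fin 3`. -/
def ketI : Fin 3 × Fin 3 → ℂ := fun x =>
  if x = (1, 2) then (1 / Real.sqrt 2 : ℝ)
  else if x = (2, 1) then -(1 / Real.sqrt 2 : ℝ) else 0

/-- The vector `|II⟩ = (|3⟩|1⟩ - |1⟩|3⟩)/√2`. -/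
def ketII : Fin 3 × Fin 3 → ℂ := fun x =>
  if x = (2, 0) then (1 / Real.sqrt 2 : ℝ)
  else if x = (0, 2) then -(1 / Real.sqrt 2 : ℝ) else 0

/-- The vector `|III⟩ = (|1⟩|2⟩ - |2⟩|1⟩)/√2`. -/
def ketIII : Fin 3 × Fin 3 → ℂ := fun x =>
  if x = (0, 1) then (1 / Real.sqrt 2 : ℝ)
  else if x = (1, 0) then -(1 / Real.sqrt 2 : ℝ) else 0

/-- The totally antisymmetric two-qutrit state. -/
def antisymState : Matrix (Fin 3 × Fin 3) (Fin 3 × Fin 3) ℂ :=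
  (1 / 3 : ℂ) • (outer ketI + outer ketII + outer ketIII)

/-!
Evaluate the conditional mutual information on the trivial extension, where it is the mutual
information `S(A) + S(B) - S(AB)`. In dimension `d` the antisymmetric Werner state is a multiple of
`1 - F` with `F` the swap. As `(1 - F)² = 2 (1 - F)`, it is a normalised projector of rank
`d (d - 1) / 2`, while both marginals are maximally mixed; hence the mutual information is
`2 log₂ d - log₂ (d (d - 1) / 2) = log₂ (2 d / (d - 1))`, which is `log₂ 3` for `d = 3`.
-/

section FlatSpectrum

variable {n : Type*} [Fintype n] {ρ : Matrix n n ℂ} {c : ℝ}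

open Polynomial in
lemma eigenvalues_eq_zero_or_eq_of_mul_self_eq_smul (hρ : ρ.IsHermitian)
    (hsq : ρ * ρ = c • ρ) (i : n) : hρ.eigenvalues i = 0 ∨ hρ.eigenvalues i = c := by
  have : Nonempty n := ⟨i⟩
  have hannihilates : aeval ρ (X * X - C c * X) = 0 := by
    simp [hsq, Algebra.algebraMap_eq_smul_one]
  have hroot := spectrum.subset_polynomial_aeval ρ (X * X - C c * X)
    ⟨_, hρ.eigenvalues_mem_spectrum_real i, rfl⟩
  rw [hannihilates, spectrum.zero_eq, Set.mem_singleton_iff] at hroot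
  simpa [← sub_mul, sub_eq_zero, or_comm] using hroot

lemma posSemidef_of_mul_self_eq_smul (hρ : ρ.IsHermitian) (hc : 0 ≤ c)
    (hsq : ρ * ρ = c • ρ) : ρ.PosSemidef := by
  refine hρ.posSemidef_iff_eigenvalues_nonneg.mpr fun i => ?_
  rcases eigenvalues_eq_zero_or_eq_of_mul_self_eq_smul hρ hsq i with h | h <;> simp [h, hc]

lemma sum_eigenvalues_eq_one_of_trace_eq_one (hρ : ρ.IsHermitian) (htr : ρ.trace = 1) :
    ∑ i, hρ.eigenvalues i = 1 := by
  simpa [← Complex.ofReal_sum] using hρ.trace_eq_sum_eigenvalues.symm.trans htr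

lemma vonNeumannEntropy_of_mul_self_eq_smul (hρ : ρ.IsHermitian) (htr : ρ.trace = 1)
    (hsq : ρ * ρ = c • ρ) : vonNeumannEntropy ρ = -Real.logb 2 c := by
  have hterm (i : n) : -(hρ.eigenvalues i * Real.logb 2 (hρ.eigenvalues i)) =
      hρ.eigenvalues i * -Real.logb 2 c := by
    rcases eigenvalues_eq_zero_or_eq_of_mul_self_eq_smul hρ hsq i with h | h <;> simp [h]
  rw [vonNeumannEntropy, dif_pos hρ, Finset.sum_congr rfl fun i _ => hterm i, ← Finset.sum_mul,
    sum_eigenvalues_eq_one_of_trace_eq_one hρ htr, one_mul]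

lemma vonNeumannEntropy_inv_card_smul_one [Nonempty n] :
    vonNeumannEntropy ((Fintype.card n : ℝ)⁻¹ • (1 : Matrix n n ℂ)) =
      Real.logb 2 (Fintype.card n) := by
  rw [vonNeumannEntropy_of_mul_self_eq_smul (c := (Fintype.card n : ℝ)⁻¹), Real.logb_inv, neg_neg]
  · simp [IsHermitian, conjTranspose_smul]
  · simp [trace_smul, trace_one]
  · simp

lemma vonNeumannEntropy_eq_zero_of_unique [Unique n] (htr : ρ.trace = 1) :
    vonNeumannEntropy ρ = 0 := by
  have hone (i j : n) : ρ i j = 1 := by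
    rw [Subsingleton.elim i default, Subsingleton.elim j default, ← htr, trace,
      Fintype.sum_unique, diag_apply]
  rw [vonNeumannEntropy_of_mul_self_eq_smul (c := 1) ?_ htr ?_, Real.logb_one, neg_zero]
  · ext i j; simp [hone]
  · ext i j; simp [mul_apply, hone]

end FlatSpectrum

lemma vonNeumannEntropy_eq_sum_roots_charpoly {n : Type*} [Fintype n] {ρ : Matrix n n ℂ}
    (hρ : ρ.IsHermitian) : vonNeumannEntropy ρ =
      (ρ.charpoly.roots.map fun z => -(z.re * Real.logb 2 z.re)).sum := by
  rw [vonNeumannEntropy, dif_pos hρ, hρ.roots_charpoly_eq_eigenvalues, Multiset.map_map]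
  rfl

lemma vonNeumannEntropy_submatrix_equiv {m n : Type*} [Fintype m] [Fintype n] (e : m ≃ n)
    (ρ : Matrix n n ℂ) : vonNeumannEntropy (ρ.submatrix e e) = vonNeumannEntropy ρ := by
  by_cases hρ : ρ.IsHermitian
  · rw [vonNeumannEntropy_eq_sum_roots_charpoly hρ,
      vonNeumannEntropy_eq_sum_roots_charpoly (hρ.submatrix e)]
    congr 3
    simpa using charpoly_reindex e.symm ρ
  · have hsub : ¬ (ρ.submatrix e e).IsHermitian := by
      rwa [isHermitian_submatrix_equiv]
    rw [vonNeumannEntropy, vonNeumannEntropy, dif_neg hρ, dif_neg hsub]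

/-- The quantum mutual information `I(A;B) = S(A) + S(B) - S(AB)`. -/
def mutualInfo (ρ : Matrix (A × B) (A × B) ℂ) : ℝ :=
  vonNeumannEntropy (ptraceR ρ) + vonNeumannEntropy (ptraceL ρ) - vonNeumannEntropy ρ

/-- The extension of `ρ` by a one-dimensional system, indexed by `Fin 1` as `Esq` requires. -/
def trivialExtension {m n : Type*} (ρ : Matrix (m × n) (m × n) ℂ) :
    Matrix (m × n × Fin 1) (m × n × Fin 1) ℂ :=
  ρ.submatrix ((Equiv.refl m).prodCongr (Equiv.prodUnique n (Fin 1)))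
    ((Equiv.refl m).prodCongr (Equiv.prodUnique n (Fin 1)))

lemma margAB_trivialExtension {m n : Type*} (ρ : Matrix (m × n) (m × n) ℂ) :
    margAB (trivialExtension ρ) = ρ := by
  ext
  simp [margAB, trivialExtension]

lemma trace_margE (ρ : Matrix (A × B × E) (A × B × E) ℂ) : (margE ρ).trace = ρ.trace := by
  simp only [trace, diag_apply, margE, Fintype.sum_prod_type]
  rw [Finset.sum_comm]
  exact Finset.sum_congr rfl fun a _ => Finset.sum_comm

section TrivialExtension

variable {ρ : Matrix (A × B) (A × B) ℂ}

lemma trace_trivialExtension : (trivialExtension ρ).trace = ρ.trace := by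
  simp [trace, trivialExtension, Fintype.sum_prod_type]

lemma vonNeumannEntropy_margAE_trivialExtension :
    vonNeumannEntropy (margAE (trivialExtension ρ)) = vonNeumannEntropy (ptraceR ρ) :=
  vonNeumannEntropy_submatrix_equiv (Equiv.prodUnique A (Fin 1)) (ptraceR ρ)

lemma vonNeumannEntropy_margBE_trivialExtension :
    vonNeumannEntropy (margBE (trivialExtension ρ)) = vonNeumannEntropy (ptraceL ρ) :=
  vonNeumannEntropy_submatrix_equiv (Equiv.prodUnique B (Fin 1)) (ptraceL ρ)

lemma vonNeumannEntropy_margE_trivialExtension (htr : ρ.trace = 1) :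
    vonNeumannEntropy (margE (trivialExtension ρ)) = 0 :=
  vonNeumannEntropy_eq_zero_of_unique <| by rw [trace_margE, trace_trivialExtension, htr]

lemma condMutualInfo_trivialExtension (htr : ρ.trace = 1) :
    condMutualInfo (trivialExtension ρ) = mutualInfo ρ := by
  rw [condMutualInfo, mutualInfo, vonNeumannEntropy_margAE_trivialExtension,
    vonNeumannEntropy_margBE_trivialExtension, vonNeumannEntropy_margE_trivialExtension htr,
    sub_zero, trivialExtension, vonNeumannEntropy_submatrix_equiv]

lemma IsState.trivialExtension (hρ : IsState ρ) : IsState (trivialExtension ρ) :=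
  ⟨hρ.1.submatrix _, trace_trivialExtension.trans hρ.2⟩

end TrivialExtension

-- `sInf` takes the junk value `0` on a set of reals that is not bounded below.
lemma sInf_le_of_mem_of_nonneg {s : Set ℝ} {x : ℝ} (hx : x ∈ s) (hnonneg : 0 ≤ x) :
    sInf s ≤ x := by
  by_cases hbdd : BddBelow s
  · exact csInf_le hbdd hx
  · rwa [Real.sInf_of_not_bddBelow hbdd]

lemma Esq_le_of_isState {ρ : Matrix (A × B) (A × B) ℂ} {d : ℕ}
    {ρE : Matrix (A × B × Fin d) (A × B × Fin d) ℂ} (hρE : IsState ρE) (hext : margAB ρE = ρ)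
    (hnonneg : 0 ≤ condMutualInfo ρE) : Esq ρ ≤ (1 / 2) * condMutualInfo ρE :=
  sInf_le_of_mem_of_nonneg ⟨d, ρE, hρE, hext, rfl⟩ (by positivity)

lemma Esq_le_half_mutualInfo {ρ : Matrix (A × B) (A × B) ℂ} (hρ : IsState ρ)
    (hnonneg : 0 ≤ mutualInfo ρ) : Esq ρ ≤ (1 / 2) * mutualInfo ρ := by
  rw [← condMutualInfo_trivialExtension hρ.2] at hnonneg ⊢
  exact Esq_le_of_isState hρ.trivialExtension (margAB_trivialExtension ρ) hnonneg

lemma trace_ptraceR_s12 (ρ : Matrix (A × B) (A × B) ℂ) : (ptraceR ρ).trace = ρ.trace := by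
  simp [trace, ptraceR, Fintype.sum_prod_type]

lemma ptraceR_smul (c : ℝ) (ρ : Matrix (A × B) (A × B) ℂ) :
    ptraceR (c • ρ) = c • ptraceR ρ := by
  ext
  simp [ptraceR, Finset.mul_sum]

lemma ptraceL_smul (c : ℝ) (ρ : Matrix (A × B) (A × B) ℂ) :
    ptraceL (c • ρ) = c • ptraceL ρ := by
  ext
  simp [ptraceL, Finset.mul_sum]

/-- The swap operator `F` on two copies of a system: `F (|i⟩|j⟩) = |j⟩|i⟩`. -/
def swapMatrix (n : Type*) : Matrix (n × n) (n × n) ℂ :=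
  Equiv.Perm.permMatrix ℂ (Equiv.prodComm n n)

lemma swapMatrix_apply {n : Type*} (i j : n × n) :
    swapMatrix n i j = if i.swap = j then 1 else 0 := by
  simp [swapMatrix, Equiv.Perm.permMatrix, PEquiv.toMatrix_apply, eq_comm]

lemma isHermitian_swapMatrix (n : Type*) : (swapMatrix n).IsHermitian := by
  simp [IsHermitian, swapMatrix, conjTranspose_permMatrix, Equiv.Perm.inv_def]

section Antisymmetric

variable (n : Type*) [Fintype n]

lemma swapMatrix_mul_self : swapMatrix n * swapMatrix n = 1 := by
  have hinvolutive : (Equiv.prodComm n n : Equiv.Perm (n × n)) * Equiv.prodComm n n = 1 := by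
    ext <;> rfl
  rw [swapMatrix, ← permMatrix_mul, hinvolutive, permMatrix_one]

lemma one_sub_swapMatrix_mul_self :
    (1 - swapMatrix n) * (1 - swapMatrix n) = (2 : ℝ) • (1 - swapMatrix n) := by
  rw [sub_mul, mul_sub, mul_sub, swapMatrix_mul_self, two_smul]
  noncomm_ring

lemma ptraceR_one_sub_swapMatrix :
    ptraceR (1 - swapMatrix n) = ((Fintype.card n : ℝ) - 1) • 1 := by
  ext i j
  rcases eq_or_ne i j with rfl | hij
  · simp [ptraceR, swapMatrix_apply, eq_comm (a := i)]
  · simp [ptraceR, swapMatrix_apply, one_apply, hij]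

lemma ptraceL_one_sub_swapMatrix :
    ptraceL (1 - swapMatrix n) = ((Fintype.card n : ℝ) - 1) • 1 := by
  ext i j
  rcases eq_or_ne i j with rfl | hij
  · simp [ptraceL, swapMatrix_apply, eq_comm (a := i)]
  · simp [ptraceL, swapMatrix_apply, one_apply, hij]

lemma trace_one_sub_swapMatrix : (1 - swapMatrix n).trace =
    ((Fintype.card n * (Fintype.card n - 1) : ℝ) : ℂ) := by
  rw [← trace_ptraceR_s12, ptraceR_one_sub_swapMatrix, trace_smul, trace_one, Complex.real_smul]
  push_cast
  ring

/-- The antisymmetric Werner state: the projector `(1 - F) / 2` onto the antisymmetric subspace,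
divided by the dimension `d (d - 1) / 2` of that subspace. -/
def antisymWernerState : Matrix (n × n) (n × n) ℂ :=
  ((Fintype.card n : ℝ) * (Fintype.card n - 1))⁻¹ • (1 - swapMatrix n)

lemma isHermitian_antisymWernerState : (antisymWernerState n).IsHermitian :=
  (isHermitian_one.sub (isHermitian_swapMatrix n)).smul (IsSelfAdjoint.all _)

lemma antisymWernerState_mul_self : antisymWernerState n * antisymWernerState n =
    (2 / ((Fintype.card n : ℝ) * (Fintype.card n - 1))) • antisymWernerState n := by
  simp only [antisymWernerState, smul_mul_smul_comm, one_sub_swapMatrix_mul_self, smul_smul]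
  congr 1
  ring

variable [Nontrivial n]

lemma card_sub_one_pos : (0 : ℝ) < Fintype.card n - 1 :=
  sub_pos.mpr (mod_cast Fintype.one_lt_card)

lemma trace_antisymWernerState : (antisymWernerState n).trace = 1 := by
  have hne : ((Fintype.card n * (Fintype.card n - 1) : ℝ) : ℂ) ≠ 0 := by
    exact_mod_cast mul_ne_zero (Nat.cast_ne_zero.mpr Fintype.card_ne_zero) (card_sub_one_pos n).ne'
  rw [antisymWernerState, trace_smul, trace_one_sub_swapMatrix, Complex.real_smul,
    Complex.ofReal_inv, inv_mul_cancel₀ hne]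

lemma isState_antisymWernerState : IsState (antisymWernerState n) := by
  have hpos := card_sub_one_pos n
  exact ⟨posSemidef_of_mul_self_eq_smul (isHermitian_antisymWernerState n) (by positivity)
    (antisymWernerState_mul_self n), trace_antisymWernerState n⟩

lemma ptraceR_antisymWernerState :
    ptraceR (antisymWernerState n) = (Fintype.card n : ℝ)⁻¹ • 1 := by
  rw [antisymWernerState, ptraceR_smul, ptraceR_one_sub_swapMatrix, smul_smul, mul_inv,
    inv_mul_cancel_right₀ (card_sub_one_pos n).ne']

lemma ptraceL_antisymWernerState :
    ptraceL (antisymWernerState n) = (Fintype.card n : ℝ)⁻¹ • 1 := by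
  rw [antisymWernerState, ptraceL_smul, ptraceL_one_sub_swapMatrix, smul_smul, mul_inv,
    inv_mul_cancel_right₀ (card_sub_one_pos n).ne']

lemma mutualInfo_antisymWernerState : mutualInfo (antisymWernerState n) =
    Real.logb 2 (2 * Fintype.card n / (Fintype.card n - 1)) := by
  have hcard : (Fintype.card n : ℝ) ≠ 0 := Nat.cast_ne_zero.mpr Fintype.card_ne_zero
  have hsub := (card_sub_one_pos n).ne'
  rw [mutualInfo, ptraceR_antisymWernerState, ptraceL_antisymWernerState,
    vonNeumannEntropy_inv_card_smul_one,
    vonNeumannEntropy_of_mul_self_eq_smul (isHermitian_antisymWernerState n)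
      (trace_antisymWernerState n) (antisymWernerState_mul_self n),
    sub_neg_eq_add, ← Real.logb_mul hcard hcard, ← Real.logb_mul (by positivity) (by positivity)]
  congr 1
  field_simp

theorem squashedEntanglement_antisym_le_general : Esq (antisymWernerState n) ≤
    (1 / 2) * Real.logb 2 (2 * Fintype.card n / (Fintype.card n - 1)) := by
  have hratio : 1 ≤ (2 * Fintype.card n / (Fintype.card n - 1) : ℝ) := by
    rw [one_le_div (card_sub_one_pos n)]
    linarith [card_sub_one_pos n]
  rw [← mutualInfo_antisymWernerState]
  refine Esq_le_half_mutualInfo (isState_antisymWernerState n) ?_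
  rw [mutualInfo_antisymWernerState]
  exact Real.logb_nonneg one_lt_two hratio

end Antisymmetric

lemma antisymState_eq_antisymWernerState : antisymState = antisymWernerState (Fin 3) := by
  have hsqrt : ((√2 : ℝ) : ℂ)⁻¹ * ((√2 : ℝ) : ℂ)⁻¹ = 1 / 2 := by
    rw [← mul_inv, ← Complex.ofReal_mul, Real.mul_self_sqrt zero_le_two]
    norm_num
  ext ⟨a, b⟩ ⟨a', b'⟩
  simp only [antisymState, antisymWernerState, outer, ketI, ketII, ketIII, Matrix.smul_apply,
    Matrix.add_apply, Matrix.sub_apply, one_apply, swapMatrix_apply, vecMulVec_apply, Pi.star_apply]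
  fin_cases a <;> fin_cases b <;> fin_cases a' <;> fin_cases b' <;> simp [hsqrt] <;> norm_num

/-- The squashed entanglement of the totally antisymmetric two-qutrit state
is at most `(1/2) log₂ 3`. -/
theorem squashedEntanglement_antisym_le :
    Esq antisymState ≤ (1 / 2) * Real.logb 2 3 := by
  rw [antisymState_eq_antisymWernerState]
  convert squashedEntanglement_antisym_le_general (Fin 3) using 3
  norm_num

end
end
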